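/- arXiv:2303.00671 — 8 statements merged into one kernel-verified Lean document; each statement's English description precedes it below -/
import Mathlib

section
/- Suppose θ_n > 0 and, for all i ≠ j ∈ S, θ_n·r_n(i,j) converges to a finite limit r(i,j) ∈ [0,∞). Let R ⊆ S be a closed irreducible class of the continuous-time Markov chain on S with jump rates r, that is: r(j,k) = 0 whenever j ∈ R and k ∉ R, and any two distinct states of R are connected by a path inside R along which the rates r are strictly positive. Then there is a unique probability measure M on R satisfying the detailed-balance relations M(j)r(j,k) = M(k)r(k,j) for all j,k ∈ R (M is the unique stationary state of the chain with rates r restricted to R), M(j) > 0 for all j ∈ R, and for every j ∈ R the sequence π_n(V^j_n)/π_n(∪_{k∈R} V^k_n) converges to M(j). -/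
open Filter

/-!
Write `p n i = π_n(V^i_n)` and `c n i j = θ_n r_n(i,j)`. Reversibility makes the aggregated flow
symmetric: `p n i * c n i j = p n j * c n j i` (`flow_symm`). Hence, along an edge with
`r i j > 0`, the ratio `p n i / p n j = c n j i / c n i j` converges to the finite limit
`r j i / r i j`. Multiplying along paths, all ratios `p n i / p n j` inside the irreducible class
converge (`tendsto_ratio_of_path`), so that
`p n j / ∑ k, p n k = (∑ k, p n k / p n j)⁻¹` converges as well; the limit `M j` is positive since
the term `k = j` of the sum is always `1`. Detailed balance and normalisation pass to the limit.
For uniqueness, if `M'` is also in detailed balance then `M' / M` is constant along edges, hence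
constant on the class, and the constant is `1` by normalisation.
-/

/-- The stationary flow from `A` to `B` equals that from `B` to `A`, also when it is written
through the mean jump rates and an arbitrary time scale `t`. -/
lemma flow_symm {α : Type*} (π : α → ℝ) (R : α → α → ℝ)
    (hdb : ∀ x y, π x * R x y = π y * R y x) (A B : Finset α) (t : ℝ)
    (hA : 0 < ∑ x ∈ A, π x) (hB : 0 < ∑ x ∈ B, π x) :
    (∑ x ∈ A, π x) * (t * ((∑ x ∈ A, π x)⁻¹ * ∑ x ∈ A, ∑ y ∈ B, π x * R x y)) =
      (∑ x ∈ B, π x) * (t * ((∑ x ∈ B, π x)⁻¹ * ∑ x ∈ B, ∑ y ∈ A, π x * R x y)) := by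
  have h : ∑ x ∈ A, ∑ y ∈ B, π x * R x y = ∑ x ∈ B, ∑ y ∈ A, π x * R x y := by
    rw [Finset.sum_comm]
    exact Finset.sum_congr rfl fun x _ => Finset.sum_congr rfl fun y _ => hdb y x
  rw [h]
  field_simp

/-- Weight ratios converge along edges of positive limiting rate, and therefore along paths. The
limit may vanish here: the reverse rates need not be positive. -/
lemma tendsto_ratio_of_path {ι : Type*} (p : ℕ → ι → ℝ) (hp : ∀ n i, 0 < p n i)
    (c : ℕ → ι → ι → ℝ) (hsymm : ∀ n i j, p n i * c n i j = p n j * c n j i)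
    (r : ι → ι → ℝ)
    (hconv : ∀ i j, i ≠ j → Tendsto (fun n => c n i j) atTop (nhds (r i j)))
    (s : Finset ι) {j k : ι}
    (hjk : Relation.ReflTransGen (fun a b => a ∈ s ∧ b ∈ s ∧ 0 < r a b) j k) :
    ∃ L : ℝ, Tendsto (fun n => p n j / p n k) atTop (nhds L) := by
  induction hjk with
  | refl =>
    refine ⟨1, tendsto_const_nhds.congr fun n => ?_⟩
    exact (div_self (hp n j).ne').symm
  | @tail a b _ hab ih =>
    obtain ⟨L, hL⟩ := ih
    rcases eq_or_ne a b with rfl | hne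
    · exact ⟨L, hL⟩
    · have hr := hab.2.2
      refine ⟨L * (r b a / r a b),
        (hL.mul ((hconv b a hne.symm).div (hconv a b hne) hr.ne')).congr' ?_⟩
      filter_upwards [(hconv a b hne).eventually (lt_mem_nhds hr)] with n hn
      have ha := (hp n a).ne'
      have hb := (hp n b).ne'
      have hn' := hn.ne'
      have h := hsymm n a b
      have h2 : c n b a / c n a b = p n a / p n b := by
        rw [div_eq_div_iff hn' hb]
        linarith
      simp only [Pi.div_apply, h2]
      field_simp

/-- Two weights in detailed balance with `r`, one of them positive, are proportional along paths
of positive rates. -/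
lemma proportional_of_path {ι : Type*} (r : ι → ι → ℝ) (s : Finset ι) (M M' : ι → ℝ)
    (hM : ∀ j ∈ s, 0 < M j)
    (hdb : ∀ j ∈ s, ∀ k ∈ s, M j * r j k = M k * r k j)
    (hdb' : ∀ j ∈ s, ∀ k ∈ s, M' j * r j k = M' k * r k j) {j k : ι}
    (hjk : Relation.ReflTransGen (fun a b => a ∈ s ∧ b ∈ s ∧ 0 < r a b) j k) :
    M' j / M j = M' k / M k := by
  induction hjk with
  | refl => rfl
  | @tail a b _ hab ih =>
    obtain ⟨ha, hb, hr⟩ := hab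
    rw [ih, div_eq_div_iff (hM a ha).ne' (hM b hb).ne']
    refine mul_right_cancel₀ hr.ne' ?_
    linear_combination M b * hdb' a ha b hb - M' b * hdb a ha b hb

/-- If `θ n * r_n(i,j) → r(i,j)` and `R ⊆ S` is a closed irreducible class
of the chain with rates `r`, then there is a unique probability measure `M` on `R`
satisfying detailed balance; it is strictly positive and
`π_n(V^j_n)/π_n(∪_{k∈R} V^k_n) → M(j)` for every `j ∈ R`. -/
theorem stmt1
    (Ξ : ℕ → Type) [∀ n, Fintype (Ξ n)] [∀ n, DecidableEq (Ξ n)]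
    (π : ∀ n, Ξ n → ℝ) (R : ∀ n, Ξ n → Ξ n → ℝ)
    (hπpos : ∀ n x, 0 < π n x)
    (hπsum : ∀ n, ∑ x, π n x = 1)
    (hRnonneg : ∀ n x y, 0 ≤ R n x y)
    (hdb : ∀ n x y, π n x * R n x y = π n y * R n y x)
    (m : ℕ) (V : ∀ n, Fin m → Finset (Ξ n))
    (hVdisj : ∀ n, ∀ i j : Fin m, i ≠ j → Disjoint (V n i) (V n j))
    (hVne : ∀ n i, (V n i).Nonempty)
    (θ : ℕ → ℝ) (hθ : ∀ n, 0 < θ n)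
    (r : Fin m → Fin m → ℝ) (hrnn : ∀ i j, 0 ≤ r i j)
    (hconv : ∀ i j : Fin m, i ≠ j →
      Tendsto (fun n => θ n * ((∑ x ∈ V n i, π n x)⁻¹ *
          ∑ x ∈ V n i, ∑ y ∈ V n j, π n x * R n x y)) atTop (nhds (r i j)))
    (Rc : Finset (Fin m)) (hRcne : Rc.Nonempty)
    (hclosed : ∀ j ∈ Rc, ∀ k, k ∉ Rc → r j k = 0)
    (hirr : ∀ j ∈ Rc, ∀ k ∈ Rc,
      Relation.ReflTransGen (fun a b => a ∈ Rc ∧ b ∈ Rc ∧ 0 < r a b) j k) :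
    ∃ M : Fin m → ℝ,
      (∀ j ∈ Rc, 0 < M j) ∧ (∑ j ∈ Rc, M j = 1) ∧
      (∀ j ∈ Rc, ∀ k ∈ Rc, M j * r j k = M k * r k j) ∧
      (∀ j ∈ Rc, Tendsto
        (fun n => (∑ x ∈ V n j, π n x) /
          (∑ x ∈ Rc.biUnion (fun k => V n k), π n x)) atTop (nhds (M j))) ∧
      (∀ M' : Fin m → ℝ, (∀ j ∈ Rc, 0 ≤ M' j) → (∑ j ∈ Rc, M' j = 1) →
        (∀ j ∈ Rc, ∀ k ∈ Rc, M' j * r j k = M' k * r k j) →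
        ∀ j ∈ Rc, M' j = M j) := by
  have hp : ∀ n i, 0 < ∑ x ∈ V n i, π n x :=
    fun n i => Finset.sum_pos (fun x _ => hπpos n x) (hVne n i)
  have hsymm := fun n i j =>
    flow_symm (π n) (R n) (hdb n) (V n i) (V n j) (θ n) (hp n i) (hp n j)
  have hunion : ∀ n, ∑ x ∈ Rc.biUnion (fun k => V n k), π n x
      = ∑ k ∈ Rc, ∑ x ∈ V n k, π n x :=
    fun n => Finset.sum_biUnion fun i _ j _ hij => hVdisj n i j hij
  simp only [hunion]
  -- From here on only the aggregated weights `p` and the rescaled mean rates `c` matter.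
  generalize hpdef : (fun n i => ∑ x ∈ V n i, π n x) = p at *
  have hpe : ∀ n i, ∑ x ∈ V n i, π n x = p n i := fun n i => by rw [← hpdef]
  simp only [hpe] at hp hsymm hconv ⊢
  have hex : ∀ j k, ∃ L : ℝ, j ∈ Rc → k ∈ Rc →
      Tendsto (fun n => p n j / p n k) atTop (nhds L) := by
    intro j k
    by_cases h : j ∈ Rc ∧ k ∈ Rc
    · obtain ⟨L, hL⟩ := tendsto_ratio_of_path p hp _ hsymm r hconv Rc (hirr j h.1 k h.2)
      exact ⟨L, fun _ _ => hL⟩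
    · exact ⟨0, fun hj hk => absurd ⟨hj, hk⟩ h⟩
  choose L hL using hex
  have hS : ∀ n, 0 < ∑ k ∈ Rc, p n k := fun n => Finset.sum_pos (fun k _ => hp n k) hRcne
  have hsum : ∀ j ∈ Rc, Tendsto (fun n => ∑ k ∈ Rc, p n k / p n j) atTop
      (nhds (∑ k ∈ Rc, L k j)) :=
    fun j hj => tendsto_finsetSum _ fun k hk => hL k j hk hj
  have hge : ∀ j ∈ Rc, 1 ≤ ∑ k ∈ Rc, L k j := by
    intro j hj
    refine ge_of_tendsto' (hsum j hj) fun n => ?_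
    rw [← div_self (hp n j).ne']
    exact Finset.single_le_sum (f := fun k => p n k / p n j)
      (fun k _ => (div_pos (hp n k) (hp n j)).le) hj
  have hlim : ∀ j ∈ Rc, Tendsto (fun n => p n j / ∑ k ∈ Rc, p n k) atTop
      (nhds (∑ k ∈ Rc, L k j)⁻¹) := by
    intro j hj
    refine ((hsum j hj).inv₀ (by linarith [hge j hj])).congr fun n => ?_
    rw [← Finset.sum_div, inv_div]
  have hMpos : ∀ j ∈ Rc, 0 < (∑ k ∈ Rc, L k j)⁻¹ :=
    fun j hj => inv_pos.2 (by linarith [hge j hj])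
  have hMsum : ∑ j ∈ Rc, (∑ k ∈ Rc, L k j)⁻¹ = 1 := by
    refine tendsto_nhds_unique (tendsto_finsetSum Rc hlim) ?_
    refine tendsto_const_nhds.congr fun n => ?_
    rw [← Finset.sum_div, div_self (hS n).ne']
  have hMdb : ∀ j ∈ Rc, ∀ k ∈ Rc,
      (∑ i ∈ Rc, L i j)⁻¹ * r j k = (∑ i ∈ Rc, L i k)⁻¹ * r k j := by
    intro j hj k hk
    rcases eq_or_ne j k with rfl | hne
    · rfl
    refine tendsto_nhds_unique ((hlim j hj).mul (hconv j k hne))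
      (((hlim k hk).mul (hconv k j hne.symm)).congr fun n => ?_)
    rw [div_mul_eq_mul_div, div_mul_eq_mul_div, hsymm n j k]
  refine ⟨fun j => (∑ k ∈ Rc, L k j)⁻¹, hMpos, hMsum, hMdb, hlim, ?_⟩
  intro M' _ hM'sum hM'db j hj
  set M : Fin m → ℝ := fun j => (∑ k ∈ Rc, L k j)⁻¹ with hMdef
  have hprop : ∀ k ∈ Rc, M' k = M' j / M j * M k := by
    intro k hk
    rw [proportional_of_path r Rc M M' hMpos hMdb hM'db (hirr j hj k hk),
      div_mul_cancel₀ _ (hMpos k hk).ne']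
  have hconst : M' j / M j = 1 := by
    rw [← hM'sum, Finset.sum_congr rfl hprop, ← Finset.mul_sum, hMsum, mul_one]
  exact (div_eq_one_iff_eq (hMpos j hj).ne').1 hconst
end

section
/- Suppose θ_n > 0 and, for all i ≠ j ∈ S, θ_n·r_n(i,j) converges to a finite limit r(i,j) ∈ [0,∞). Let D ⊆ S be an equivalence class of the communication relation of the chain on S with jump rates r (any two distinct states of D are connected by a path inside D along which r is strictly positive; D need not be closed). Then there is a unique probability measure m on D satisfying m(j)r(j,k) = m(k)r(k,j) for all j,k ∈ D, with m(j) > 0 for all j ∈ D, and for every j ∈ D the sequence π_n(V^j_n)/π_n(∪_{k∈D} V^k_n) converges to m(j) ∈ (0,1]. -/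
open Filter

/-!
Write `w n j = π_n(V^j_n)` and let `a n i j` be the rescaled mean jump rate `θ_n r_n(i,j)`. Detailed
balance for `R_n` passes to the mean rates: `w n i * a n i j = w n j * a n j i`. Hence along an edge
with `0 < r i j` the quotient `w n i / w n j` eventually equals `a n j i / a n i j` and converges to
`r j i / r i j`. Multiplying along paths, `w n i / w n j` converges for all `i, j` in the class
(`tendsto_ratio`), so `w n j / ∑ k, w n k = (∑ k, w n k / w n j)⁻¹` converges to a positive limit:
the limiting sum contains the term `w n j / w n j = 1` (`exists_tendsto_normalized`).
Detailed balance for the limit follows by uniqueness of limits, and two reversible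
weights on the same class are proportional, again by following paths (`reversible_proportional`).
-/

/-- Detailed balance for the jump rates passes to the mean jump rates between two sets. -/
theorem mean_rate_balance {X : Type} (p : X → ℝ) (Q : X → X → ℝ) (hp : ∀ x, 0 < p x)
    (hdb : ∀ x y, p x * Q x y = p y * Q y x) (A B : Finset X) (hA : A.Nonempty)
    (hB : B.Nonempty) (t : ℝ) :
    (∑ x ∈ A, p x) * (t * ((∑ x ∈ A, p x)⁻¹ * ∑ x ∈ A, ∑ y ∈ B, p x * Q x y)) =
      (∑ x ∈ B, p x) * (t * ((∑ x ∈ B, p x)⁻¹ * ∑ x ∈ B, ∑ y ∈ A, p x * Q x y)) := by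
  have h1 : (∑ x ∈ A, p x) ≠ 0 := (Finset.sum_pos (fun x _ => hp x) hA).ne'
  have h2 : (∑ x ∈ B, p x) ≠ 0 := (Finset.sum_pos (fun x _ => hp x) hB).ne'
  have h3 : ∑ x ∈ A, ∑ y ∈ B, p x * Q x y = ∑ x ∈ B, ∑ y ∈ A, p x * Q x y := by
    rw [Finset.sum_comm]
    exact Finset.sum_congr rfl fun y _ => Finset.sum_congr rfl fun x _ => hdb x y
  rw [h3]
  field_simp

/-- Along a path of positive limiting rates, the ratio of the weights at the endpoints converges. The
self-loops of `r` carry no information, since `hconv` only concerns distinct indices. -/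
theorem tendsto_ratio {ι : Type} {w : ℕ → ι → ℝ} (hw : ∀ n i, 0 < w n i)
    {a : ℕ → ι → ι → ℝ} {r : ι → ι → ℝ}
    (hbal : ∀ n i j, w n i * a n i j = w n j * a n j i)
    (hconv : ∀ i j, i ≠ j → Tendsto (fun n => a n i j) atTop (nhds (r i j)))
    {D : Finset ι} {j k : ι}
    (hjk : Relation.ReflTransGen (fun a b => a ∈ D ∧ b ∈ D ∧ 0 < r a b) j k) :
    ∃ l, Tendsto (fun n => w n j / w n k) atTop (nhds l) := by
  have hself : ∀ i, Tendsto (fun n => w n i / w n i) atTop (nhds 1) := fun i => by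
    simp [div_self (hw _ i).ne']
  induction hjk with
  | refl => exact ⟨1, hself j⟩
  | @tail b c _ hbc ih =>
    obtain ⟨l, hl⟩ := ih
    obtain ⟨-, -, hr⟩ := hbc
    by_cases hne : b = c
    · exact ⟨l, hne ▸ hl⟩
    refine ⟨l * (r c b / r b c), ?_⟩
    have h := hl.mul ((hconv c b (Ne.symm hne)).div (hconv b c hne) hr.ne')
    refine h.congr' ?_
    filter_upwards [(hconv b c hne).eventually (lt_mem_nhds hr)] with n hn
    have h1 := (hw n b).ne'
    have h2 := (hw n c).ne'
    have h3 := hn.ne'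
    simp only [Pi.div_apply]
    field_simp
    linear_combination -w n j * hbal n b c

/-- If all ratios of positive weights on `D` converge, then the normalized weights have positive
limits. -/
theorem exists_tendsto_normalized {ι : Type} {w : ℕ → ι → ℝ} (hw : ∀ n i, 0 < w n i)
    {D : Finset ι}
    (h : ∀ j ∈ D, ∀ k ∈ D, ∃ l, Tendsto (fun n => w n j / w n k) atTop (nhds l))
    {j : ι} (hj : j ∈ D) :
    ∃ l, 0 < l ∧ Tendsto (fun n => w n j / ∑ k ∈ D, w n k) atTop (nhds l) := by
  choose! L hL using h
  have hpos : 1 ≤ ∑ k ∈ D, L k j := by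
    have h1 : L j j = 1 := by
      refine tendsto_nhds_unique (hL j hj j hj) ?_
      simp [div_self (hw _ j).ne']
    rw [← h1]
    exact Finset.single_le_sum (f := fun k => L k j) (fun k hk =>
      ge_of_tendsto' (hL k hk j hj) fun n => (div_pos (hw n k) (hw n j)).le) hj
  refine ⟨(∑ k ∈ D, L k j)⁻¹, by positivity, ?_⟩
  have h2 := (tendsto_finsetSum D fun k hk => hL k hk j hj).inv₀ (by positivity)
  refine h2.congr fun n => ?_
  rw [← Finset.sum_div, inv_div]

/-- Two weights reversible for the same rates, the second one positive, have the same quotient at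
the endpoints of any path. -/
theorem reversible_proportional {ι : Type} {r : ι → ι → ℝ} {D : Finset ι} {M M' : ι → ℝ}
    (hM : ∀ j ∈ D, 0 < M j)
    (hbal : ∀ j ∈ D, ∀ k ∈ D, M j * r j k = M k * r k j)
    (hbal' : ∀ j ∈ D, ∀ k ∈ D, M' j * r j k = M' k * r k j) {j k : ι}
    (hjk : Relation.ReflTransGen (fun a b => a ∈ D ∧ b ∈ D ∧ 0 < r a b) j k) :
    M' j / M j = M' k / M k := by
  induction hjk with
  | refl => rfl
  | @tail b c _ hbc ih =>
    obtain ⟨hb, hc, hr⟩ := hbc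
    rw [ih, div_eq_div_iff (hM b hb).ne' (hM c hc).ne']
    refine mul_right_cancel₀ hr.ne' ?_
    linear_combination M c * hbal' b hb c hc - M' c * hbal b hb c hc

/-- If `θ n * r_n(i,j) → r(i,j)` and `D ⊆ S` (here called `Rc`) is a
communication class (not necessarily closed) of the chain with rates `r`,
then there is a unique probability measure `m` on `D`
satisfying the detailed-balance relations; it is strictly positive and
`π_n(V^j_n)/π_n(∪_{k∈D} V^k_n) → m(j) ∈ (0,1]` for every `j ∈ D`. -/
theorem stmt2
    (Ξ : ℕ → Type) [∀ n, Fintype (Ξ n)] [∀ n, DecidableEq (Ξ n)]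
    (π : ∀ n, Ξ n → ℝ) (R : ∀ n, Ξ n → Ξ n → ℝ)
    (hπpos : ∀ n x, 0 < π n x)
    (hπsum : ∀ n, ∑ x, π n x = 1)
    (hRnonneg : ∀ n x y, 0 ≤ R n x y)
    (hdb : ∀ n x y, π n x * R n x y = π n y * R n y x)
    (m : ℕ) (V : ∀ n, Fin m → Finset (Ξ n))
    (hVdisj : ∀ n, ∀ i j : Fin m, i ≠ j → Disjoint (V n i) (V n j))
    (hVne : ∀ n i, (V n i).Nonempty)
    (θ : ℕ → ℝ) (hθ : ∀ n, 0 < θ n)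
    (r : Fin m → Fin m → ℝ) (hrnn : ∀ i j, 0 ≤ r i j)
    (hconv : ∀ i j : Fin m, i ≠ j →
      Tendsto (fun n => θ n * ((∑ x ∈ V n i, π n x)⁻¹ *
          ∑ x ∈ V n i, ∑ y ∈ V n j, π n x * R n x y)) atTop (nhds (r i j)))
    (Rc : Finset (Fin m)) (hRcne : Rc.Nonempty)
    (hirr : ∀ j ∈ Rc, ∀ k ∈ Rc,
      Relation.ReflTransGen (fun a b => a ∈ Rc ∧ b ∈ Rc ∧ 0 < r a b) j k) :
    ∃ M : Fin m → ℝ,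
      (∀ j ∈ Rc, 0 < M j ∧ M j ≤ 1) ∧ (∑ j ∈ Rc, M j = 1) ∧
      (∀ j ∈ Rc, ∀ k ∈ Rc, M j * r j k = M k * r k j) ∧
      (∀ j ∈ Rc, Tendsto
        (fun n => (∑ x ∈ V n j, π n x) /
          (∑ x ∈ Rc.biUnion (fun k => V n k), π n x)) atTop (nhds (M j))) ∧
      (∀ M' : Fin m → ℝ, (∀ j ∈ Rc, 0 ≤ M' j) → (∑ j ∈ Rc, M' j = 1) →
        (∀ j ∈ Rc, ∀ k ∈ Rc, M' j * r j k = M' k * r k j) →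
        ∀ j ∈ Rc, M' j = M j) := by
  set w : ℕ → Fin m → ℝ := fun n i => ∑ x ∈ V n i, π n x with hwdef
  set a : ℕ → Fin m → Fin m → ℝ := fun n i j => θ n * ((∑ x ∈ V n i, π n x)⁻¹ *
    ∑ x ∈ V n i, ∑ y ∈ V n j, π n x * R n x y) with hadef
  have hw : ∀ n i, 0 < w n i := fun n i => Finset.sum_pos (fun x _ => hπpos n x) (hVne n i)
  have hbal : ∀ n i j, w n i * a n i j = w n j * a n j i := fun n i j =>
    mean_rate_balance (π n) (R n) (hπpos n) (hdb n) (V n i) (V n j) (hVne n i) (hVne n j) (θ n)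
  have hW : ∀ n, ∑ x ∈ Rc.biUnion (fun k => V n k), π n x = ∑ k ∈ Rc, w n k := fun n =>
    Finset.sum_biUnion fun i _ j _ hij => hVdisj n i j hij
  have hWpos : ∀ n, 0 < ∑ k ∈ Rc, w n k := fun n => Finset.sum_pos (fun k _ => hw n k) hRcne
  have hlim : ∀ j ∈ Rc, ∃ l, 0 < l ∧
      Tendsto (fun n => w n j / ∑ k ∈ Rc, w n k) atTop (nhds l) := fun j hj =>
    exists_tendsto_normalized hw
      (fun j hj k hk => tendsto_ratio hw hbal hconv (hirr j hj k hk)) hj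
  choose! M hMpos hM using hlim
  have hsum : ∑ j ∈ Rc, M j = 1 := by
    refine tendsto_nhds_unique (tendsto_finsetSum Rc hM) (tendsto_const_nhds.congr fun n => ?_)
    rw [← Finset.sum_div, div_self (hWpos n).ne']
  have hMbal : ∀ j ∈ Rc, ∀ k ∈ Rc, M j * r j k = M k * r k j := by
    intro j hj k hk
    by_cases hjk : j = k
    · rw [hjk]
    refine tendsto_nhds_unique ((hM j hj).mul (hconv j k hjk))
      (((hM k hk).mul (hconv k j (Ne.symm hjk))).congr fun n => ?_)
    have h := hbal n j k
    simp only [hadef] at h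
    rw [div_mul_eq_mul_div, div_mul_eq_mul_div, h]
  refine ⟨M, fun j hj => ⟨hMpos j hj, ?_⟩, hsum, hMbal, fun j hj => ?_, ?_⟩
  · rw [← hsum]
    exact Finset.single_le_sum (fun k hk => (hMpos k hk).le) hj
  · simpa only [hW] using hM j hj
  · intro M' _ hsum' hbal' j hj
    have hk : ∀ k ∈ Rc, M' j * M k = M' k * M j := fun k hk =>
      (div_eq_div_iff (hMpos j hj).ne' (hMpos k hk).ne').1
        (reversible_proportional hMpos hMbal hbal' (hirr j hj k hk))
    have h := Finset.sum_congr rfl hk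
    rwa [← Finset.mul_sum, ← Finset.sum_mul, hsum, hsum', mul_one, one_mul] at h
end

section
/- Suppose θ_n > 0 and, for all i ≠ j ∈ S, θ_n·r_n(i,j) converges to a finite limit r(i,j) ∈ [0,∞). Let j ∈ S be a transient state of the continuous-time Markov chain on S with jump rates r, i.e., j does not belong to any closed irreducible class of this chain. Then π_n(V^j_n) → 0 as n → ∞. In particular, if π_n(∪_{k∈S} V^k_n) → 1, then π_n(∪ V^k_n) → 1, where the last union is over the states k belonging to the closed irreducible classes of the chain with rates r. -/
/-!
Write `a n i` for the mass `π_n(V^i_n)` and `q n i k` for `θ_n r_n(i,k)`.  Detailed balance, summed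
over `V^i_n × V^k_n`, gives `a n i * q n i k = a n k * q n k i`.  Hence, if `r(i,k) > 0`,
eventually `a n i = a n k * (q n k i / q n i k)`, where the quotient converges to `r(k,i) / r(i,k)`;
as masses are bounded, `a n i → 0` as soon as `a n k → 0` or `r(k,i) = 0`
(`mass_tendsto_zero_of_edge`).

A transient state `j` leads to some `k` from which `j` cannot be reached, for otherwise the set of
states reachable from `j` would be a closed irreducible class (`exists_no_return`).  Some edge of a
path from `j` to `k` therefore has reverse rate zero, so the mass at its starting point vanishes,
and this propagates backwards along the path to `j` (`return_or_mass_tendsto_zero`).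
-/

open Filter

/-- A closed irreducible class of the finite-state chain with jump rates `r`. -/
def IsClosedIrreducibleClass {m : ℕ} (r : Fin m → Fin m → ℝ) (Rc : Finset (Fin m)) : Prop :=
  Rc.Nonempty ∧ (∀ j ∈ Rc, ∀ k, k ∉ Rc → r j k = 0) ∧
    ∀ j ∈ Rc, ∀ k ∈ Rc,
      Relation.ReflTransGen (fun a b => a ∈ Rc ∧ b ∈ Rc ∧ 0 < r a b) j k

/-- Reversibility across a single edge: `a` and `b` are the masses at its two ends, `p` and `q` the
forward and reverse rates, with limits `rp > 0` and `rq`.  The mass at the start vanishes if the one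
at the end does, or if the limiting reverse rate is zero. -/
theorem mass_tendsto_zero_of_edge {a b p q : ℕ → ℝ} {rp rq : ℝ}
    (hb : ∀ n, 0 ≤ b n) (hb1 : ∀ n, b n ≤ 1)
    (hbal : ∀ n, a n * p n = b n * q n)
    (hp : Tendsto p atTop (nhds rp)) (hq : Tendsto q atTop (nhds rq)) (hrp : 0 < rp)
    (h : Tendsto b atTop (nhds 0) ∨ rq = 0) : Tendsto a atTop (nhds 0) := by
  have hquot : Tendsto (fun n => b n * q n) atTop (nhds 0) := by
    rcases h with h | h
    · simpa using h.mul hq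
    · subst h
      refine bdd_le_mul_tendsto_zero (b := 0) (B := 1) ?_ ?_ hq
      · exact Eventually.of_forall hb
      · exact Eventually.of_forall hb1
  have h0 : Tendsto (fun n => b n * q n / p n) atTop (nhds 0) := by
    have := hquot.div hp hrp.ne'
    rwa [zero_div] at this
  refine h0.congr' ?_
  filter_upwards [hp.eventually (lt_mem_nhds hrp)] with n hn
  rw [← hbal n, mul_div_cancel_right₀ _ hn.ne']

/-- Along a path of positive rates from `j` to `k`, either `k` leads back to `j` (through the
reversed edges), or the mass at `j` vanishes in the limit. -/
theorem return_or_mass_tendsto_zero {m : ℕ} {a : ℕ → Fin m → ℝ} {q : ℕ → Fin m → Fin m → ℝ}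
    {r : Fin m → Fin m → ℝ} (ha : ∀ n i, 0 ≤ a n i) (ha1 : ∀ n i, a n i ≤ 1)
    (hrnn : ∀ i k, 0 ≤ r i k)
    (hbal : ∀ n i k, a n i * q n i k = a n k * q n k i)
    (hconv : ∀ i k, i ≠ k → Tendsto (fun n => q n i k) atTop (nhds (r i k)))
    {j k : Fin m} (hjk : Relation.ReflTransGen (fun x y => 0 < r x y) j k) :
    Relation.ReflTransGen (fun x y => 0 < r x y) k j ∨
      Tendsto (fun n => a n j) atTop (nhds 0) := by
  induction hjk using Relation.ReflTransGen.head_induction_on with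
  | refl => exact Or.inl .refl
  | @head j c hjc _ ih =>
    by_cases hne : j = c
    · subst hne; exact ih
    have edge := mass_tendsto_zero_of_edge (fun n => ha n c) (fun n => ha1 n c)
      (fun n => hbal n j c) (hconv j c hne) (hconv c j (Ne.symm hne)) hjc
    rcases ih with hkc | hc
    · rcases (hrnn c j).eq_or_lt with h0 | hpos
      · exact Or.inr (edge (Or.inr h0.symm))
      · exact Or.inl (hkc.tail hpos)
    · exact Or.inr (edge (Or.inl hc))

/-- A transient state leads to some state that does not lead back to it. -/
theorem exists_no_return {m : ℕ} {r : Fin m → Fin m → ℝ} (hrnn : ∀ i k, 0 ≤ r i k) {j : Fin m}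
    (htrans : ∀ Rc : Finset (Fin m), IsClosedIrreducibleClass r Rc → j ∉ Rc) :
    ∃ k, Relation.ReflTransGen (fun x y => 0 < r x y) j k ∧
      ¬ Relation.ReflTransGen (fun x y => 0 < r x y) k j := by
  classical
  by_contra! hret
  let Rc : Finset (Fin m) :=
    Finset.univ.filter (Relation.ReflTransGen (fun x y => 0 < r x y) j)
  have hmem : ∀ x, x ∈ Rc ↔ Relation.ReflTransGen (fun x y => 0 < r x y) j x := by
    simp [Rc]
  have hj : j ∈ Rc := (hmem j).2 .refl
  refine htrans Rc ⟨⟨j, hj⟩, ?_, ?_⟩ hj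
  · intro x hx y hy
    by_contra hne
    exact hy ((hmem y).2 (((hmem x).1 hx).tail ((hrnn x y).lt_of_ne' hne)))
  · intro x hx y hy
    have hxy := (hret x ((hmem x).1 hx)).trans ((hmem y).1 hy)
    -- A path starting in the reachable set never leaves it.
    clear hy
    induction hxy with
    | refl => exact .refl
    | @tail b c hxb hbc ih =>
      have hb : b ∈ Rc := (hmem b).2 (((hmem x).1 hx).trans hxb)
      exact ih.tail ⟨hb, (hmem c).2 (((hmem b).1 hb).tail hbc), hbc⟩

/-- If `θ n * r_n(i,j) → r(i,j)` and `j` is a transient state of the chain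
with rates `r`, then `π_n(V^j_n) → 0`.  In particular, if `π_n(∪_{k∈S} V^k_n) → 1`, then
`π_n(∪_{k recurrent} V^k_n) → 1`. -/
theorem stmt3
    (Ξ : ℕ → Type) [∀ n, Fintype (Ξ n)] [∀ n, DecidableEq (Ξ n)]
    (π : ∀ n, Ξ n → ℝ) (R : ∀ n, Ξ n → Ξ n → ℝ)
    (hπpos : ∀ n x, 0 < π n x)
    (hπsum : ∀ n, ∑ x, π n x = 1)
    (hRnonneg : ∀ n x y, 0 ≤ R n x y)
    (hdb : ∀ n x y, π n x * R n x y = π n y * R n y x)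
    (m : ℕ) (V : ∀ n, Fin m → Finset (Ξ n))
    (hVdisj : ∀ n, ∀ i j : Fin m, i ≠ j → Disjoint (V n i) (V n j))
    (hVne : ∀ n i, (V n i).Nonempty)
    (θ : ℕ → ℝ) (hθ : ∀ n, 0 < θ n)
    (r : Fin m → Fin m → ℝ) (hrnn : ∀ i j, 0 ≤ r i j)
    (hconv : ∀ i j : Fin m, i ≠ j →
      Tendsto (fun n => θ n * ((∑ x ∈ V n i, π n x)⁻¹ *
          ∑ x ∈ V n i, ∑ y ∈ V n j, π n x * R n x y)) atTop (nhds (r i j)))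
    (j : Fin m)
    (htrans : ∀ Rc : Finset (Fin m), IsClosedIrreducibleClass r Rc → j ∉ Rc)
    (Rec : Finset (Fin m))
    (hRec : ∀ k, k ∈ Rec ↔ ∃ Rc : Finset (Fin m), IsClosedIrreducibleClass r Rc ∧ k ∈ Rc) :
    Tendsto (fun n => ∑ x ∈ V n j, π n x) atTop (nhds 0) ∧
      (Tendsto (fun n => ∑ x ∈ Finset.univ.biUnion (V n), π n x) atTop (nhds 1) →
        Tendsto (fun n => ∑ x ∈ Rec.biUnion (V n), π n x) atTop (nhds 1)) := by
  classical
  have hpos : ∀ n i, 0 < ∑ x ∈ V n i, π n x := fun n i =>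
    Finset.sum_pos (fun x _ => hπpos n x) (hVne n i)
  have hle : ∀ n i, ∑ x ∈ V n i, π n x ≤ 1 := fun n i => by
    rw [← hπsum n]
    exact Finset.sum_le_sum_of_subset_of_nonneg (Finset.subset_univ _)
      (fun x _ _ => (hπpos n x).le)
  have hbal : ∀ n (i k : Fin m),
      (∑ x ∈ V n i, π n x) * (θ n * ((∑ x ∈ V n i, π n x)⁻¹ *
          ∑ x ∈ V n i, ∑ y ∈ V n k, π n x * R n x y)) =
      (∑ x ∈ V n k, π n x) * (θ n * ((∑ x ∈ V n k, π n x)⁻¹ *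
          ∑ x ∈ V n k, ∑ y ∈ V n i, π n x * R n x y)) := by
    intro n i k
    have hsymm : ∑ x ∈ V n i, ∑ y ∈ V n k, π n x * R n x y =
        ∑ x ∈ V n k, ∑ y ∈ V n i, π n x * R n x y := by
      rw [Finset.sum_comm]
      exact Finset.sum_congr rfl fun x _ => Finset.sum_congr rfl fun y _ => hdb n y x
    rw [mul_left_comm, mul_inv_cancel_left₀ (hpos n i).ne', mul_left_comm,
      mul_inv_cancel_left₀ (hpos n k).ne', hsymm]
  have key : ∀ k : Fin m, (∀ Rc : Finset (Fin m), IsClosedIrreducibleClass r Rc → k ∉ Rc) →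
      Tendsto (fun n => ∑ x ∈ V n k, π n x) atTop (nhds 0) := by
    intro k hk
    obtain ⟨l, hkl, hlk⟩ := exists_no_return hrnn hk
    exact (return_or_mass_tendsto_zero (a := fun n i => ∑ x ∈ V n i, π n x)
      (fun n i => (hpos n i).le) hle hrnn hbal hconv hkl).resolve_left hlk
  refine ⟨key j htrans, fun htot => ?_⟩
  have hsum : ∀ n (T : Finset (Fin m)),
      ∑ x ∈ T.biUnion (V n), π n x = ∑ i ∈ T, ∑ x ∈ V n i, π n x := fun n T =>
    Finset.sum_biUnion fun i _ k _ hik => hVdisj n i k hik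
  have hcompl : Tendsto (fun n => ∑ i ∈ Recᶜ, ∑ x ∈ V n i, π n x) atTop (nhds 0) := by
    rw [← Finset.sum_const_zero (s := Recᶜ)]
    refine tendsto_finsetSum _ fun k hk => key k fun Rc hRc hkRc => ?_
    exact Finset.mem_compl.1 hk ((hRec k).2 ⟨Rc, hRc, hkRc⟩)
  have hdiff := htot.sub hcompl
  rw [sub_zero] at hdiff
  refine hdiff.congr fun n => ?_
  rw [hsum, hsum, ← Finset.sum_add_sum_compl Rec, add_sub_cancel_right]
end

section
/- Let U^1_n,…,U^m_n be pairwise disjoint nonempty subsets of Ξ_n and let μ_n be a probability measure on Ξ_n. Then, for every n, Σ_{j=1}^m D_n(U^j_n, √(f^j_n)) ≤ ℐ_n(μ_n), where f^j_n(z) := μ_n(z)·π_n(U^j_n)/π_n(z) for z ∈ U^j_n. In particular, if θ_n > 0 and limsup_{n→∞} θ_n·ℐ_n(μ_n) < ∞, then limsup_{n→∞} θ_n·Σ_{j=1}^m D_n(U^j_n, √(f^j_n)) < ∞. -/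
open Filter

/-!
Put `g x = √(μ x / π x)`. On a block `A` one has `√f = √π(A) · g`, so the factor `π(A)` extracted
from the squared increments cancels the normalisation `1 / π(A)` of `D(A, √f)`
(`restrictedDirichlet_eq`). Hence `D(A, √f)` is half the sum of `π(x) R(x, y) (g y - g x)²`
over pairs inside `A`. As the blocks are pairwise disjoint, these pairs are counted at most once
in the full sum defining `ℐ(μ)`, and all terms are nonnegative (`sum_blocks_le`).
-/

/-- The normalisation of the restricted Dirichlet form cancels: `D(A, √f)` is half of the
unnormalised sum of squared increments of `√(μ / π)` inside `A`. -/
lemma restrictedDirichlet_eq {α : Type} [DecidableEq α] (π μ : α → ℝ) (R : α → α → ℝ)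
    (hπ : ∀ x, 0 < π x) (A : Finset α) (hA : A.Nonempty) :
    (1 / (2 * ∑ x ∈ A, π x)) *
        ∑ x ∈ A, ∑ y ∈ A.erase x, π x * R x y *
          (Real.sqrt (μ y * (∑ z ∈ A, π z) / π y) -
            Real.sqrt (μ x * (∑ z ∈ A, π z) / π x)) ^ 2 =
      (1 / 2) * ∑ x ∈ A, ∑ y ∈ A.erase x, π x * R x y *
        (Real.sqrt (μ y / π y) - Real.sqrt (μ x / π x)) ^ 2 := by
  have hP : 0 < ∑ x ∈ A, π x := Finset.sum_pos (fun x _ => hπ x) hA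
  generalize (∑ x ∈ A, π x) = P at hP
  have hs : ∀ x, Real.sqrt (μ x * P / π x) = Real.sqrt P * Real.sqrt (μ x / π x) := by
    intro x
    rw [← Real.sqrt_mul hP.le]
    congr 1
    ring
  simp_rw [hs, Finset.mul_sum]
  refine Finset.sum_congr rfl fun x _ => Finset.sum_congr rfl fun y _ => ?_
  rw [← mul_sub, mul_pow, Real.sq_sqrt hP.le]
  field_simp

/-- For a nonnegative kernel, the off-diagonal sums over disjoint blocks add up to at most the
off-diagonal sum over the whole space. -/
lemma sum_blocks_le {α ι : Type} [Fintype α] [DecidableEq α] [Fintype ι]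
    (F : α → α → ℝ) (hF : ∀ x y, 0 ≤ F x y) (U : ι → Finset α)
    (hU : ∀ i j, i ≠ j → Disjoint (U i) (U j)) :
    ∑ j, ∑ x ∈ U j, ∑ y ∈ (U j).erase x, F x y ≤
      ∑ x, ∑ y ∈ Finset.univ.erase x, F x y := by
  calc ∑ j, ∑ x ∈ U j, ∑ y ∈ (U j).erase x, F x y
      ≤ ∑ j, ∑ x ∈ U j, ∑ y ∈ Finset.univ.erase x, F x y :=
        Finset.sum_le_sum fun j _ => Finset.sum_le_sum fun x _ =>
          Finset.sum_le_sum_of_subset_of_nonneg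
            (Finset.erase_subset_erase x (Finset.subset_univ _)) fun y _ _ => hF x y
    _ = ∑ x ∈ Finset.univ.biUnion U, ∑ y ∈ Finset.univ.erase x, F x y :=
        (Finset.sum_biUnion fun i _ j _ h => hU i j h).symm
    _ ≤ ∑ x, ∑ y ∈ Finset.univ.erase x, F x y :=
        Finset.sum_le_sum_of_subset_of_nonneg (Finset.subset_univ _) fun x _ _ =>
          Finset.sum_nonneg fun y _ => hF x y

/-- For pairwise disjoint sets `U^1_n, …, U^m_n`,
`Σ_j D_n(U^j_n, √f^j_n) ≤ ℐ_n(μ_n)` with `f^j_n = μ_n·π_n(U^j_n)/π_n`; in particular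
if `limsup θ_n ℐ_n(μ_n) < ∞` then `limsup θ_n Σ_j D_n(U^j_n, √f^j_n) < ∞`. -/
theorem stmt6
    (Ξ : ℕ → Type) [∀ n, Fintype (Ξ n)] [∀ n, DecidableEq (Ξ n)]
    (π : ∀ n, Ξ n → ℝ) (R : ∀ n, Ξ n → Ξ n → ℝ)
    (hπpos : ∀ n x, 0 < π n x)
    (hπsum : ∀ n, ∑ x, π n x = 1)
    (hRnonneg : ∀ n x y, 0 ≤ R n x y)
    (hdb : ∀ n x y, π n x * R n x y = π n y * R n y x)
    (m : ℕ) (U : ∀ n, Fin m → Finset (Ξ n))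
    (hUne : ∀ n j, (U n j).Nonempty)
    (hUdisj : ∀ n, ∀ i j : Fin m, i ≠ j → Disjoint (U n i) (U n j))
    (μ : ∀ n, Ξ n → ℝ) (hμnn : ∀ n x, 0 ≤ μ n x) (hμsum : ∀ n, ∑ x, μ n x = 1)
    (θ : ℕ → ℝ) (hθ : ∀ n, 0 < θ n) :
    (∀ n, ∑ j : Fin m,
        (1 / (2 * ∑ x ∈ U n j, π n x)) *
          ∑ x ∈ U n j, ∑ y ∈ (U n j).erase x, π n x * R n x y *
            (Real.sqrt (μ n y * (∑ z ∈ U n j, π n z) / π n y) -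
              Real.sqrt (μ n x * (∑ z ∈ U n j, π n z) / π n x)) ^ 2 ≤
      (1 / 2) * ∑ x : Ξ n, ∑ y ∈ Finset.univ.erase x, π n x * R n x y *
        (Real.sqrt (μ n y / π n y) - Real.sqrt (μ n x / π n x)) ^ 2) ∧
    (IsBoundedUnder (· ≤ ·) atTop (fun n => θ n *
        ((1 / 2) * ∑ x : Ξ n, ∑ y ∈ Finset.univ.erase x, π n x * R n x y *
          (Real.sqrt (μ n y / π n y) - Real.sqrt (μ n x / π n x)) ^ 2)) →
      IsBoundedUnder (· ≤ ·) atTop (fun n => θ n *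
        ∑ j : Fin m, (1 / (2 * ∑ x ∈ U n j, π n x)) *
          ∑ x ∈ U n j, ∑ y ∈ (U n j).erase x, π n x * R n x y *
            (Real.sqrt (μ n y * (∑ z ∈ U n j, π n z) / π n y) -
              Real.sqrt (μ n x * (∑ z ∈ U n j, π n z) / π n x)) ^ 2)) := by
  refine (fun h => ⟨h, fun hb => hb.mono_le (Eventually.of_forall fun n =>
    mul_le_mul_of_nonneg_left (h n) (hθ n).le)⟩) fun n => ?_
  rw [Finset.sum_congr rfl fun j _ =>
    restrictedDirichlet_eq (π n) (μ n) (R n) (hπpos n) (U n j) (hUne n j), ← Finset.mul_sum]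
  exact mul_le_mul_of_nonneg_left
    (sum_blocks_le (fun x y => π n x * R n x y *
        (Real.sqrt (μ n y / π n y) - Real.sqrt (μ n x / π n x)) ^ 2)
      (fun x y => mul_nonneg (mul_nonneg (hπpos n x).le (hRnonneg n x y)) (sq_nonneg _))
      (U n) (hUdisj n)) (by norm_num)
end

section
/- Assume: (i) for all k ≠ j ∈ S, θ_n·π_n(V^j_n)^{-1}·Σ_{x∈V^j_n} π_n(x)G^{j,k}_n(x) converges to a finite limit r(j,k) ∈ [0,∞); (ii) for every j ∈ S and i ∈ S_j, π_n(V^{1,i}_n)/π_n(V^j_n) converges to some m_j(i) ∈ (0,1]; (iii) there is a sequence β_n > 0 with β_n/θ_n → 0 such that for every i ∈ {1,…,N} and every function h : V^{1,i}_n → ℝ, max_{x∈V^{1,i}_n} Σ_{y∈V^{1,i}_n} π_n(y|V^{1,i}_n)(h(y) − h(x))² ≤ β_n·D_n(V^{1,i}_n, h); (iv) the probability measures μ_n on Ξ_n converge weakly to Σ_{j∈S} ω_j Σ_{i∈S_j} m_j(i) δ_{x_i} for some probability vector ω on S; and (v) limsup_{n→∞} θ_n·ℐ_n(μ_n) < ∞.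 Then, for all k ≠ j ∈ S, θ_n·Σ_{x∈V^j_n} μ_n(x)G^{j,k}_n(x) converges to ω_j·r(j,k). -/
/-!
The spectral-gap estimate, applied to `h = √(μ/π)` in a small well `V` of stationary mass `p` and
`μ`-mass `q`, gives `∑_{y ∈ V} π(y) (h(y) - h(z))² ≤ K` for every `z ∈ V`, where `K = β ℐ(μ) → 0`
because `θ ℐ(μ)` is bounded and `β / θ → 0`. By Cauchy-Schwarz `|√q - √p h(z)| ≤ √K`, so
`p h(z)²` is close to `q` uniformly in `z ∈ V` (`abs_mass_sub_le`): on each small well `μ` is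
uniformly comparable to `(q / p) π`, and the same comparison holds for the integrals of `G`
(`abs_rate_sub_le`).

Weak convergence, tested against tent functions at the points `x i`, bounds the masses `q` of the
small wells from below; since the limiting masses already add up to one, nothing is lost and
`q → ω_j m_j(i)` (`tendsto_of_lower_bounds`, `tendsto_well_mass`). As `p / π(V^j) → m_j(i) > 0`,
each small well in `V^j` contributes `ω_j` times its share of the stationary mean rate, up to an
error that vanishes because the total stationary mean rate converges. Summing over the small
wells yields the limit `ω_j r(j,k)`.
-/

open Filter

/-- If every value `h z` is close to `h` in the weighted mean square on `s`, then `p (h z)²` is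
close to the weighted square norm of `h`, where `p` is the total weight. -/
lemma abs_mass_sub_le {α : Type*} (s : Finset α) (w h : α → ℝ) (z : α) (K : ℝ)
    (hw : ∀ y ∈ s, 0 ≤ w y) (hz : 0 ≤ h z)
    (hq : ∑ y ∈ s, w y * h y ^ 2 ≤ 1)
    (hK : ∑ y ∈ s, w y * (h y - h z) ^ 2 ≤ K) :
    |∑ y ∈ s, w y * h y ^ 2 - (∑ y ∈ s, w y) * h z ^ 2| ≤ Real.sqrt K * (2 + Real.sqrt K) := by
  set q := ∑ y ∈ s, w y * h y ^ 2 with hqdef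
  set p := ∑ y ∈ s, w y with hpdef
  have hq0 : 0 ≤ q := Finset.sum_nonneg fun y hy => mul_nonneg (hw y hy) (sq_nonneg _)
  have hp0 : 0 ≤ p := Finset.sum_nonneg hw
  have hexp : ∑ y ∈ s, w y * (h y - h z) ^ 2
      = q - 2 * h z * (∑ y ∈ s, w y * h y) + p * h z ^ 2 := by
    rw [hqdef, hpdef, Finset.mul_sum, Finset.sum_mul, ← Finset.sum_sub_distrib,
      ← Finset.sum_add_distrib]
    exact Finset.sum_congr rfl fun y _ => by ring
  have hcs : ∑ y ∈ s, w y * h y ≤ Real.sqrt p * Real.sqrt q := by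
    rw [← Real.sqrt_mul hp0]
    apply Real.le_sqrt_of_sq_le
    apply Finset.sum_sq_le_sum_mul_sum_of_sq_le_mul s hw
      (fun y hy => mul_nonneg (hw y hy) (sq_nonneg _))
    intro y _
    exact le_of_eq (by ring)
  have hsq := Real.sq_sqrt hq0
  have hsp := Real.sq_sqrt hp0
  have ha1 : Real.sqrt q ≤ 1 := Real.sqrt_le_one.mpr hq
  have ha0 := Real.sqrt_nonneg q
  set a := Real.sqrt q
  set b := Real.sqrt p * h z with hb
  have hb2 : p * h z ^ 2 = b ^ 2 := by rw [hb, mul_pow, hsp]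
  have hab : (a - b) ^ 2 ≤ K := by
    have := mul_le_mul_of_nonneg_left hcs hz
    have e : (a - b) ^ 2 = q - 2 * (h z * (Real.sqrt p * a)) + p * h z ^ 2 := by
      rw [hb2, ← hsq, hb]; ring
    rw [e]; rw [hexp] at hK
    linarith
  have habs : |a - b| ≤ Real.sqrt K := Real.abs_le_sqrt hab
  rw [hb2, ← hsq]
  have h1 : a ^ 2 - b ^ 2 = (a - b) * (a + b) := by ring
  have h2 : |a + b| ≤ 2 + Real.sqrt K := by
    rw [abs_le] at habs ⊢
    have : 0 ≤ b := mul_nonneg (Real.sqrt_nonneg _) hz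
    constructor <;> linarith [habs.1, habs.2, Real.sqrt_nonneg K]
  rw [h1, abs_mul]
  exact mul_le_mul habs h2 (abs_nonneg _) (Real.sqrt_nonneg _)

/-- Two-measure form of `abs_mass_sub_le` with `h = √(u/w)`, integrated against a nonnegative
function `g`: the `u`-integral of `g` is close to its `w`-integral, up to the ratio of the masses
of `s`. -/
lemma abs_rate_sub_le {α : Type*} (s : Finset α) (w u g : α → ℝ) (K : ℝ)
    (hw : ∀ y ∈ s, 0 < w y) (hu : ∀ y ∈ s, 0 ≤ u y) (hg : ∀ y ∈ s, 0 ≤ g y)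
    (hu1 : ∑ y ∈ s, u y ≤ 1)
    (hK : ∀ z ∈ s, ∑ y ∈ s, w y * (Real.sqrt (u y / w y) - Real.sqrt (u z / w z)) ^ 2 ≤ K) :
    |(∑ y ∈ s, w y) * (∑ y ∈ s, u y * g y) - (∑ y ∈ s, u y) * (∑ y ∈ s, w y * g y)|
      ≤ Real.sqrt K * (2 + Real.sqrt K) * ∑ y ∈ s, w y * g y := by
  have hwu : ∀ y ∈ s, w y * Real.sqrt (u y / w y) ^ 2 = u y := by
    intro y hy
    rw [Real.sq_sqrt (div_nonneg (hu y hy) (hw y hy).le)]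
    field_simp [(hw y hy).ne']
  have hsum : ∑ y ∈ s, w y * Real.sqrt (u y / w y) ^ 2 = ∑ y ∈ s, u y :=
    Finset.sum_congr rfl hwu
  rw [Finset.mul_sum, Finset.mul_sum, Finset.mul_sum, ← Finset.sum_sub_distrib]
  refine (Finset.abs_sum_le_sum_abs _ _).trans (Finset.sum_le_sum fun z hz => ?_)
  have h1 := abs_mass_sub_le s w (fun y => Real.sqrt (u y / w y)) z K (fun y hy => (hw y hy).le)
    (Real.sqrt_nonneg _) (hsum.trans_le hu1) (hK z hz)
  simp only [hsum] at h1
  have hwg : 0 ≤ w z * g z := mul_nonneg (hw z hz).le (hg z hz)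
  have e : (∑ y ∈ s, w y) * (u z * g z) - (∑ y ∈ s, u y) * (w z * g z)
      = -((∑ y ∈ s, u y - (∑ y ∈ s, w y) * Real.sqrt (u z / w z) ^ 2) * (w z * g z)) := by
    nth_rewrite 1 [← hwu z hz]
    ring
  rw [e, abs_neg, abs_mul, abs_of_nonneg hwg]
  exact mul_le_mul_of_nonneg_right h1 hwg

/-- No loss of mass: if the lower bounds `l i ≤ q i` converge to limits of total mass one and the
total mass of the `q i` is at most one, then the `q i` have the same limits. -/
lemma tendsto_of_lower_bounds {ι : Type*} [Fintype ι] (l q : ι → ℕ → ℝ) (L : ι → ℝ)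
    (hlq : ∀ i n, l i n ≤ q i n) (hq : ∀ n, ∑ i, q i n ≤ 1)
    (hl : ∀ i, Tendsto (l i) atTop (nhds (L i))) (hL : ∑ i, L i = 1) (i : ι) :
    Tendsto (q i) atTop (nhds (L i)) := by
  classical
  have hup : Tendsto (fun n => 1 - ∑ k ∈ Finset.univ.erase i, l k n) atTop (nhds (L i)) := by
    have h := (tendsto_finsetSum (Finset.univ.erase i) fun k _ => hl k).const_sub 1
    have e : 1 - ∑ k ∈ Finset.univ.erase i, L k = L i := by
      rw [← hL, ← Finset.add_sum_erase _ _ (Finset.mem_univ i)]; ring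
    rwa [e] at h
  refine tendsto_of_tendsto_of_tendsto_of_le_of_le (hl i) hup (hlq i) fun n => ?_
  have h1 := hq n
  rw [← Finset.add_sum_erase _ _ (Finset.mem_univ i)] at h1
  have h2 : ∑ k ∈ Finset.univ.erase i, l k n ≤ ∑ k ∈ Finset.univ.erase i, q k n :=
    Finset.sum_le_sum fun k _ => hlq k n
  show q i n ≤ 1 - ∑ k ∈ Finset.univ.erase i, l k n
  linarith

/-- The tent function of height one and radius `|ε|` centred at `c`. The absolute value makes
it bounded for every real `ε`, so that the definition needs no positivity hypothesis. -/
noncomputable def tent {E : Type*} [PseudoMetricSpace E] (c : E) (ε : ℝ) :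
    BoundedContinuousFunction E ℝ :=
  BoundedContinuousFunction.ofNormedAddCommGroup (fun y => max 0 (1 - dist y c / |ε|))
    (by fun_prop) 1 (fun y => by
      have : 0 ≤ dist y c / |ε| := by positivity
      rw [Real.norm_eq_abs, abs_of_nonneg (le_max_left _ _)]
      exact max_le zero_le_one (by linarith))

section tent
variable {E : Type*} [PseudoMetricSpace E]

lemma tent_apply (c y : E) (ε : ℝ) : tent c ε y = max 0 (1 - dist y c / |ε|) := rfl

lemma tent_nonneg (c y : E) (ε : ℝ) : 0 ≤ tent c ε y := le_max_left _ _

lemma tent_le_one (c y : E) (ε : ℝ) : tent c ε y ≤ 1 := by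
  have : 0 ≤ dist y c / |ε| := by positivity
  exact max_le zero_le_one (by linarith)

lemma tent_self (c : E) (ε : ℝ) : tent c ε c = 1 := by simp [tent_apply]

lemma tent_eq_zero (c y : E) {ε : ℝ} (hε : 0 < ε) (hy : y ∉ Metric.ball c ε) :
    tent c ε y = 0 := by
  rw [Metric.mem_ball, not_lt] at hy
  rw [tent_apply, abs_of_pos hε, max_eq_left]
  rw [sub_nonpos]
  exact (one_le_div hε).mpr hy

end tent

/-- The mass that `μ n` gives to the `i`-th small well converges to the mass of the limit at
`x i`, although the wells need only contain, and may exceed, the balls around the points. -/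
lemma tendsto_well_mass {E : Type*} [PseudoMetricSpace E] [DecidableEq E] {N m : ℕ}
    (Ξ : ℕ → Finset E) (x : Fin N → E) (ε : ℝ) (hε : 0 < ε)
    (hballs : ∀ i j : Fin N, i ≠ j →
      Disjoint (Metric.ball (x i) ε) (Metric.ball (x j) ε))
    (V1 : ℕ → Fin N → Finset E)
    (hV1sub : ∀ n i, V1 n i ⊆ Ξ n)
    (hV1disj : ∀ n, ∀ i j : Fin N, i ≠ j → Disjoint (V1 n i) (V1 n j))
    (hV1ball : ∀ n i, ∀ y ∈ Ξ n, y ∈ Metric.ball (x i) ε → y ∈ V1 n i)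
    (Sc : Fin m → Finset (Fin N)) (hScpart : ∀ i : Fin N, ∃! j : Fin m, i ∈ Sc j)
    (mj : Fin m → Fin N → ℝ)
    (μ : ℕ → E → ℝ) (hμnn : ∀ n, ∀ y ∈ Ξ n, 0 ≤ μ n y) (hμsum : ∀ n, ∑ y ∈ Ξ n, μ n y = 1)
    (ω : Fin m → ℝ)
    (hweak : ∀ g : BoundedContinuousFunction E ℝ,
      Tendsto (fun n => ∑ y ∈ Ξ n, μ n y * g y) atTop
        (nhds (∑ j, ω j * ∑ i ∈ Sc j, mj j i * g (x i))))
    (j : Fin m) (i : Fin N) (hij : i ∈ Sc j) :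
    Tendsto (fun n => ∑ y ∈ V1 n i, μ n y) atTop (nhds (ω j * mj j i)) := by
  have hxx : ∀ a b : Fin N, tent (x a) ε (x b) = if a = b then 1 else 0 := by
    intro a b
    split_ifs with h
    · rw [h, tent_self]
    · exact tent_eq_zero _ _ hε fun hb =>
        Set.disjoint_left.mp (hballs a b h) hb (Metric.mem_ball_self hε)
  have hLi : ∑ j', ω j' * ∑ i' ∈ Sc j', mj j' i' * tent (x i) ε (x i') = ω j * mj j i := by
    simp only [hxx, mul_ite, mul_one, mul_zero, Finset.sum_ite_eq]
    rw [Finset.sum_eq_single j]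
    · simp [hij]
    · intro b _ hb
      rw [if_neg fun hib => hb ((hScpart i).unique hib hij)]
    · simp
  rw [← hLi]
  refine tendsto_of_lower_bounds (fun i n => ∑ y ∈ Ξ n, μ n y * tent (x i) ε y)
    (fun i n => ∑ y ∈ V1 n i, μ n y)
    (fun i => ∑ j', ω j' * ∑ i' ∈ Sc j', mj j' i' * tent (x i) ε (x i'))
    ?_ ?_ (fun i => hweak (tent (x i) ε)) ?_ i
  · intro a n
    rw [← Finset.sum_subset (hV1sub n a)]
    · refine Finset.sum_le_sum fun y hy => ?_
      exact mul_le_of_le_one_right (hμnn n y (hV1sub n a hy)) (tent_le_one _ _ _)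
    · intro y hy hyV
      rw [tent_eq_zero _ _ hε fun hb => hyV (hV1ball n a y hy hb), mul_zero]
  · intro n
    rw [← Finset.sum_biUnion fun a _ b _ hab => hV1disj n a b hab, ← hμsum n]
    exact Finset.sum_le_sum_of_subset_of_nonneg
      (Finset.biUnion_subset.mpr fun a _ => hV1sub n a) fun y hy _ => hμnn n y hy
  · -- The tents sum to one at every centre, so the total is the limit of the constant mass one.
    have h1 := hweak (BoundedContinuousFunction.const E 1)
    simp only [BoundedContinuousFunction.const_apply, mul_one, hμsum] at h1
    rw [Finset.sum_comm, ← tendsto_nhds_unique h1 tendsto_const_nhds]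
    refine Finset.sum_congr rfl fun j' _ => ?_
    rw [← Finset.mul_sum, Finset.sum_comm]
    congr 1
    refine Finset.sum_congr rfl fun i' _ => ?_
    simp [hxx]

/-- Under the convergence of the mean rates w.r.t. the stationary measure
(i), the well-mass ratios (ii), the spectral-gap estimate (iii), the weak convergence of
`μ_n` (iv) and the energy bound (v), the mean rates computed w.r.t. `μ_n` converge:
`θ_n Σ_{x∈V^j_n} μ_n(x) G^{j,k}_n(x) → ω_j r(j,k)`. -/
theorem stmt8 (d N m : ℕ) [DecidableEq (EuclideanSpace ℝ (Fin d))]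
    (Ξ : ℕ → Finset (EuclideanSpace ℝ (Fin d)))
    (π : ℕ → EuclideanSpace ℝ (Fin d) → ℝ)
    (R : ℕ → EuclideanSpace ℝ (Fin d) → EuclideanSpace ℝ (Fin d) → ℝ)
    (hπpos : ∀ n, ∀ x ∈ Ξ n, 0 < π n x)
    (hπsum : ∀ n, ∑ x ∈ Ξ n, π n x = 1)
    (hRnn : ∀ n x y, 0 ≤ R n x y)
    (hdb : ∀ n x y, π n x * R n x y = π n y * R n y x)
    (x : Fin N → EuclideanSpace ℝ (Fin d)) (hx : Function.Injective x)
    (ε : ℝ) (hε : 0 < ε)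
    (hballs : ∀ i j : Fin N, i ≠ j →
      Disjoint (Metric.ball (x i) ε) (Metric.ball (x j) ε))
    (V1 : ℕ → Fin N → Finset (EuclideanSpace ℝ (Fin d)))
    (hV1sub : ∀ n i, V1 n i ⊆ Ξ n)
    (hV1disj : ∀ n, ∀ i j : Fin N, i ≠ j → Disjoint (V1 n i) (V1 n j))
    (hV1ball : ∀ n i, ∀ y ∈ Ξ n, y ∈ Metric.ball (x i) ε → y ∈ V1 n i)
    (Sc : Fin m → Finset (Fin N))
    (hScpart : ∀ i : Fin N, ∃! j : Fin m, i ∈ Sc j)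
    (G : ℕ → Fin m → Fin m → EuclideanSpace ℝ (Fin d) → ℝ)
    (hGnn : ∀ n (j k : Fin m), ∀ y ∈ (Sc j).biUnion (V1 n), 0 ≤ G n j k y)
    (θ : ℕ → ℝ) (hθ : ∀ n, 0 < θ n)
    (r : Fin m → Fin m → ℝ) (hrnn : ∀ j k, 0 ≤ r j k)
    (hi : ∀ j k : Fin m, j ≠ k → Tendsto (fun n =>
        θ n * ((∑ z ∈ (Sc j).biUnion (V1 n), π n z)⁻¹ *
          ∑ z ∈ (Sc j).biUnion (V1 n), π n z * G n j k z)) atTop (nhds (r j k)))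
    (mj : Fin m → Fin N → ℝ)
    (hmj : ∀ j, ∀ i ∈ Sc j, 0 < mj j i ∧ mj j i ≤ 1)
    (hii : ∀ j, ∀ i ∈ Sc j, Tendsto (fun n =>
        (∑ y ∈ V1 n i, π n y) / ∑ y ∈ (Sc j).biUnion (V1 n), π n y)
        atTop (nhds (mj j i)))
    (β : ℕ → ℝ) (hβ : ∀ n, 0 < β n)
    (hβθ : Tendsto (fun n => β n / θ n) atTop (nhds 0))
    (hgap : ∀ n, ∀ i : Fin N, ∀ h : EuclideanSpace ℝ (Fin d) → ℝ,
      ∀ z ∈ V1 n i,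
        ∑ y ∈ V1 n i, (π n y / ∑ w ∈ V1 n i, π n w) * (h y - h z) ^ 2 ≤
          β n * ((1 / (2 * ∑ w ∈ V1 n i, π n w)) *
            ∑ a ∈ V1 n i, ∑ b ∈ (V1 n i).erase a,
              π n a * R n a b * (h b - h a) ^ 2))
    (μ : ℕ → EuclideanSpace ℝ (Fin d) → ℝ)
    (hμnn : ∀ n, ∀ y ∈ Ξ n, 0 ≤ μ n y)
    (hμsum : ∀ n, ∑ y ∈ Ξ n, μ n y = 1)
    (ω : Fin m → ℝ) (hωnn : ∀ j, 0 ≤ ω j) (hωsum : ∑ j, ω j = 1)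
    (hweak : ∀ g : BoundedContinuousFunction (EuclideanSpace ℝ (Fin d)) ℝ,
      Tendsto (fun n => ∑ y ∈ Ξ n, μ n y * g y) atTop
        (nhds (∑ j, ω j * ∑ i ∈ Sc j, mj j i * g (x i))))
    (hbdd : IsBoundedUnder (· ≤ ·) atTop (fun n =>
      θ n * ((1 / 2) * ∑ a ∈ Ξ n, ∑ b ∈ (Ξ n).erase a,
        π n a * R n a b *
          (Real.sqrt (μ n b / π n b) - Real.sqrt (μ n a / π n a)) ^ 2))) :
    ∀ j k : Fin m, j ≠ k → Tendsto (fun n =>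
        θ n * ∑ z ∈ (Sc j).biUnion (V1 n), μ n z * G n j k z)
      atTop (nhds (ω j * r j k)) := by
  intro j k hjk
  set P : ℕ → ℝ := fun n => ∑ z ∈ (Sc j).biUnion (V1 n), π n z with hP
  set p : Fin N → ℕ → ℝ := fun i n => ∑ y ∈ V1 n i, π n y with hp
  set q : Fin N → ℕ → ℝ := fun i n => ∑ y ∈ V1 n i, μ n y with hq
  set I : ℕ → ℝ := fun n => (1 / 2) * ∑ a ∈ Ξ n, ∑ b ∈ (Ξ n).erase a,
        π n a * R n a b *
          (Real.sqrt (μ n b / π n b) - Real.sqrt (μ n a / π n a)) ^ 2 with hI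
  set A : Fin N → ℕ → ℝ := fun i n => θ n * ((P n)⁻¹ * ∑ z ∈ V1 n i, π n z * G n j k z) with hA
  set B : Fin N → ℕ → ℝ := fun i n => θ n * ∑ z ∈ V1 n i, μ n z * G n j k z with hB
  have hdisj : ∀ n, Set.PairwiseDisjoint (↑(Sc j)) (V1 n) :=
    fun n a _ b _ hab => hV1disj n a b hab
  have hAsum : Tendsto (fun n => ∑ i ∈ Sc j, A i n) atTop (nhds (r j k)) := by
    refine (hi j k hjk).congr fun n => ?_
    rw [Finset.sum_biUnion (f := fun z => π n z * G n j k z) (hdisj n), Finset.mul_sum,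
      Finset.mul_sum]
  have hP0 : ∀ n, 0 ≤ P n := fun n => Finset.sum_nonneg fun z hz => by
    obtain ⟨i, _, hz⟩ := Finset.mem_biUnion.mp hz
    exact (hπpos n z (hV1sub n i hz)).le
  have hA0 : ∀ i ∈ Sc j, ∀ n, 0 ≤ A i n := fun i hi n =>
    mul_nonneg (hθ n).le (mul_nonneg (inv_nonneg.mpr (hP0 n)) (Finset.sum_nonneg fun z hz =>
      mul_nonneg (hπpos n z (hV1sub n i hz)).le
        (hGnn n j k z (Finset.mem_biUnion.mpr ⟨i, hi, hz⟩))))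
  have hterm : ∀ n, ∀ a ∈ Ξ n, ∀ b, 0 ≤ π n a * R n a b *
      (Real.sqrt (μ n b / π n b) - Real.sqrt (μ n a / π n a)) ^ 2 := fun n a ha b =>
    mul_nonneg (mul_nonneg (hπpos n a ha).le (hRnn n a b)) (sq_nonneg _)
  have hI0 : ∀ n, 0 ≤ I n := fun n =>
    mul_nonneg (by norm_num) (Finset.sum_nonneg fun a ha => Finset.sum_nonneg fun b _ =>
      hterm n a ha b)
  have hK : Tendsto (fun n => β n * I n) atTop (nhds 0) := by
    obtain ⟨C, hC⟩ := hbdd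
    rw [eventually_map] at hC
    have hup : Tendsto (fun n => β n / θ n * C) atTop (nhds 0) := by
      simpa using hβθ.mul_const C
    refine squeeze_zero' (Eventually.of_forall fun n => mul_nonneg (hβ n).le (hI0 n)) ?_ hup
    filter_upwards [hC] with n hn
    have e : β n * I n = β n / θ n * (θ n * I n) := by
      field_simp [(hθ n).ne']
    rw [e]
    exact mul_le_mul_of_nonneg_left hn (div_nonneg (hβ n).le (hθ n).le)
  set δ : ℕ → ℝ := fun n => Real.sqrt (β n * I n) * (2 + Real.sqrt (β n * I n)) with hδ
  have hδ0 : Tendsto δ atTop (nhds 0) := by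
    have h1 : Tendsto (fun n => Real.sqrt (β n * I n)) atTop (nhds 0) := by
      simpa using hK.sqrt
    simpa using h1.mul (h1.const_add 2)
  have hgapK : ∀ n i, ∀ z ∈ V1 n i, ∑ y ∈ V1 n i, π n y *
      (Real.sqrt (μ n y / π n y) - Real.sqrt (μ n z / π n z)) ^ 2 ≤ β n * I n := by
    intro n i z hz
    have hpp : 0 < p i n :=
      Finset.sum_pos (fun y hy => hπpos n y (hV1sub n i hy)) ⟨z, hz⟩
    have h := hgap n i (fun y => Real.sqrt (μ n y / π n y)) z hz
    -- Restricting the energy of `√(μ/π)` to edges inside the well can only decrease it.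
    have hD : (1 / 2) * ∑ a ∈ V1 n i, ∑ b ∈ (V1 n i).erase a, π n a * R n a b *
        (Real.sqrt (μ n b / π n b) - Real.sqrt (μ n a / π n a)) ^ 2 ≤ I n := by
      refine mul_le_mul_of_nonneg_left ?_ (by norm_num)
      refine (Finset.sum_le_sum fun a ha => Finset.sum_le_sum_of_subset_of_nonneg
        (Finset.erase_subset_erase a (hV1sub n i))
        fun b _ _ => hterm n a (hV1sub n i ha) b).trans ?_
      exact Finset.sum_le_sum_of_subset_of_nonneg (hV1sub n i)
        fun a ha _ => Finset.sum_nonneg fun b _ => hterm n a ha b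
    have h2 := mul_le_mul_of_nonneg_left h hpp.le
    rw [Finset.mul_sum] at h2
    refine (le_of_eq (Finset.sum_congr rfl fun y _ => ?_)).trans
      (h2.trans (le_trans (le_of_eq ?_) (mul_le_mul_of_nonneg_left hD (hβ n).le)))
    · change _ = p i n * (π n y / p i n * _)
      field_simp
    · change p i n * (β n * (1 / (2 * p i n) * _)) = _
      field_simp
  -- Each small well contributes `ω j` times its share of the stationary mean rate. The relative
  -- error is multiplied by the total stationary rate, which is bounded, as a single `A i` need not
  -- converge.
  have hkey : ∀ i ∈ Sc j, Tendsto (fun n => B i n - ω j * A i n) atTop (nhds 0) := by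
    intro i hij
    have hm := (hmj j i hij).1
    have hρ : Tendsto (fun n => p i n / P n) atTop (nhds (mj j i)) := hii j i hij
    have hqm : Tendsto (q i) atTop (nhds (ω j * mj j i)) :=
      tendsto_well_mass Ξ x ε hε hballs V1 hV1sub hV1disj hV1ball Sc hScpart mj μ hμnn hμsum ω
        hweak j i hij
    have hbound : Tendsto (fun n => (δ n / (p i n / P n) + |q i n / (p i n / P n) - ω j|) *
        ∑ i ∈ Sc j, A i n) atTop (nhds 0) := by
      have h1 := hδ0.div hρ hm.ne'
      have h2 := ((hqm.div hρ hm.ne').sub_const (ω j)).abs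
      rw [mul_div_assoc, div_self hm.ne', mul_one, sub_self, abs_zero] at h2
      simpa using (h1.add h2).mul hAsum
    refine squeeze_zero_norm' ?_ hbound
    -- Since `p / P` has a positive limit, `P` and `p` are eventually nonzero, so that the divisions
    -- below are genuine.
    filter_upwards [hρ.eventually (lt_mem_nhds hm)] with n hn
    have hPpos : 0 < P n := lt_of_le_of_ne (hP0 n) fun h => by simp [← h] at hn
    have hppos : 0 < p i n := by
      have := mul_pos hn hPpos
      rwa [div_mul_cancel₀ _ hPpos.ne'] at this
    have hq1 : q i n ≤ 1 := by
      rw [← hμsum n]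
      exact Finset.sum_le_sum_of_subset_of_nonneg (hV1sub n i) fun y hy _ => hμnn n y hy
    have hr := abs_rate_sub_le (V1 n i) (π n) (μ n) (G n j k) (β n * I n)
      (fun y hy => hπpos n y (hV1sub n i hy)) (fun y hy => hμnn n y (hV1sub n i hy))
      (fun y hy => hGnn n j k y (Finset.mem_biUnion.mpr ⟨i, hij, hy⟩)) hq1 (hgapK n i)
    change |p i n * _ - q i n * _| ≤ δ n * _ at hr
    set b := ∑ z ∈ V1 n i, μ n z * G n j k z
    set t := ∑ z ∈ V1 n i, π n z * G n j k z
    have hAn : A i n = θ n * ((P n)⁻¹ * t) := rfl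
    have hBn : B i n = θ n * b := rfl
    have hdec : B i n - ω j * A i n = θ n / p i n * (p i n * b - q i n * t)
        + (q i n / (p i n / P n) - ω j) * A i n := by
      rw [hAn, hBn]; field_simp; ring
    have hfirst : |θ n / p i n * (p i n * b - q i n * t)| ≤ δ n / (p i n / P n) * A i n := by
      have hθp : 0 ≤ θ n / p i n := div_nonneg (hθ n).le hppos.le
      rw [abs_mul, abs_of_nonneg hθp]
      refine (mul_le_mul_of_nonneg_left hr hθp).trans (le_of_eq ?_)
      rw [hAn]; field_simp
    have hAn0 := hA0 i hij n
    have hδn : 0 ≤ δ n := by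
      have := Real.sqrt_nonneg (β n * I n)
      exact mul_nonneg this (by linarith)
    rw [Real.norm_eq_abs, hdec]
    refine (abs_add_le _ _).trans ?_
    rw [abs_mul (q i n / (p i n / P n) - ω j), abs_of_nonneg hAn0]
    refine (add_le_add_left hfirst _).trans ?_
    rw [← add_mul]
    refine mul_le_mul_of_nonneg_left
      (Finset.single_le_sum (f := fun i => A i n) (fun i hi => hA0 i hi n) hij) ?_
    exact add_nonneg (div_nonneg hδn hn.le) (abs_nonneg _)
  have hfin := (tendsto_finsetSum (Sc j) hkey).add (hAsum.const_mul (ω j))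
  simp only [Finset.sum_const_zero, zero_add] at hfin
  refine hfin.congr fun n => ?_
  rw [Finset.sum_sub_distrib, Finset.mul_sum (Sc j) (fun i => A i n), sub_add_cancel,
    Finset.sum_biUnion (f := fun z => μ n z * G n j k z) (hdisj n), Finset.mul_sum]
end

section
/- Let V be a finite set, π a probability measure on V with π(x) > 0 for all x, and R : V × V → [0,∞) symmetric-support rates (R(x,y) > 0 iff R(y,x) > 0) such that the graph on V with edge set E = {(x,y) : R(x,y) > 0} is connected, with graph diameter D (the maximal graph distance between two points of V). Then, for every function h : V → ℝ and every x ∈ V, Σ_{y∈V} π(y)(h(y) − h(x))² ≤ 2β·𝒟(h), where β := D · max_{(x,y)∈E} (π(x)R(x,y))^{-1} and 𝒟(h) := (1/2) Σ_{x∈V} Σ_{y∈V, y≠x} π(x)R(x,y)(h(y) − h(x))². -/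
/-!
Join `x` to `y` by a shortest path, of length at most `G.diam`. Telescoping `h y - h x` along
the path and applying the Cauchy–Schwarz inequality bounds `(h y - h x) ^ 2` by the length of the
path times the sum of the squared increments of `h` over its oriented edges
(`exists_path_sq_sub_le`). Each squared increment is at most
`max (π a * R a b)⁻¹` times its weighted version `π a * R a b * (h b - h a) ^ 2`, and the oriented
edges of a path are distinct, so these weighted terms add up to at most twice the Dirichlet form.
The bound is uniform in `y`, hence survives averaging against `π`.
-/

/-- The increments of a function along a walk telescope. -/
lemma sum_darts_sub {V : Type} {G : SimpleGraph V} (h : V → ℝ) {u v : V} (p : G.Walk u v) :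
    ((p.darts.map (·.toProd)).map fun e => h e.2 - h e.1).sum = h v - h u := by
  induction p with
  | nil => simp
  | cons _ q ih =>
    simp only [SimpleGraph.Walk.darts_cons, List.map_cons, List.sum_cons, ih]
    ring

/-- Cauchy–Schwarz along a shortest path; `s` is the set of its oriented edges. -/
lemma exists_path_sq_sub_le {V : Type} [Fintype V] [DecidableEq V] {G : SimpleGraph V}
    (hconn : G.Connected) (h : V → ℝ) (x y : V) :
    ∃ s : Finset (V × V), (∀ e ∈ s, G.Adj e.1 e.2) ∧
      (h y - h x) ^ 2 ≤ (G.diam : ℝ) * ∑ e ∈ s, (h e.2 - h e.1) ^ 2 := by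
  obtain ⟨p, hp, hlen⟩ := hconn.exists_path_of_dist x y
  have hnd : (p.darts.map (·.toProd)).Nodup :=
    (List.Nodup.of_map _ hp.isTrail.edges_nodup).map SimpleGraph.Dart.toProd_injective
  refine ⟨(p.darts.map (·.toProd)).toFinset, ?_, ?_⟩
  · intro e he
    obtain ⟨d, -, rfl⟩ := List.mem_map.1 (List.mem_toFinset.1 he)
    exact d.adj
  · have hne : Nonempty V := ⟨x⟩
    have hdiam : G.dist x y ≤ G.diam :=
      SimpleGraph.dist_le_diam (SimpleGraph.connected_iff_ediam_ne_top.1 hconn)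
    have hcard : (p.darts.map (·.toProd)).toFinset.card ≤ G.diam := by
      rw [List.toFinset_card_of_nodup hnd, List.length_map, SimpleGraph.Walk.length_darts, hlen]
      exact hdiam
    rw [← sum_darts_sub h p, ← List.sum_toFinset _ hnd]
    refine sq_sum_le_card_mul_sum_sq.trans ?_
    gcongr

/-- Crude Poincaré-type bound: for a connected weighted graph induced by
the positive rates, `Σ_y π(y)(h(y)-h(x))² ≤ 2β·𝒟(h)`, where
`β = diam · max_{(x,y)∈E} (π(x)R(x,y))⁻¹`. -/
theorem stmt9 (V : Type) [Fintype V] [DecidableEq V]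
    (π : V → ℝ) (hπpos : ∀ x, 0 < π x) (hπsum : ∑ x, π x = 1)
    (R : V → V → ℝ) (hRnn : ∀ x y, 0 ≤ R x y)
    (hsymm : ∀ x y, 0 < R x y ↔ 0 < R y x)
    (G : SimpleGraph V)
    (hAdj : ∀ x y, G.Adj x y ↔ x ≠ y ∧ 0 < R x y)
    (hconn : G.Connected)
    (h : V → ℝ) (x : V) :
    ∑ y, π y * (h y - h x) ^ 2 ≤
      2 * ((G.diam : ℝ) * sSup {c : ℝ | ∃ a b, 0 < R a b ∧ c = (π a * R a b)⁻¹}) *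
        ((1 / 2) * ∑ a, ∑ b ∈ Finset.univ.erase a, π a * R a b * (h b - h a) ^ 2) := by
  set M := sSup {c : ℝ | ∃ a b, 0 < R a b ∧ c = (π a * R a b)⁻¹} with hM
  set E := ∑ a, ∑ b ∈ Finset.univ.erase a, π a * R a b * (h b - h a) ^ 2 with hE
  -- `M` is a genuine supremum: the set it is taken over is finite, hence bounded above.
  have hbdd : BddAbove {c : ℝ | ∃ a b, 0 < R a b ∧ c = (π a * R a b)⁻¹} := by
    refine ((Set.finite_range fun e : V × V => (π e.1 * R e.1 e.2)⁻¹).subset ?_).bddAbove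
    rintro c ⟨a, b, -, rfl⟩
    exact ⟨(a, b), rfl⟩
  have hM0 : 0 ≤ M := by
    refine Real.sSup_nonneg ?_
    rintro c ⟨a, b, -, rfl⟩
    exact inv_nonneg.2 (mul_nonneg (hπpos a).le (hRnn a b))
  have hw : ∀ e : V × V, 0 ≤ π e.1 * R e.1 e.2 * (h e.2 - h e.1) ^ 2 := fun e =>
    mul_nonneg (mul_nonneg (hπpos _).le (hRnn _ _)) (sq_nonneg _)
  have hE' : E = ∑ e : V × V, π e.1 * R e.1 e.2 * (h e.2 - h e.1) ^ 2 := by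
    rw [hE, Fintype.sum_prod_type]
    refine Finset.sum_congr rfl fun a _ => ?_
    -- The omitted diagonal term vanishes.
    exact Finset.sum_erase _ (by simp)
  have key : ∀ y, (h y - h x) ^ 2 ≤ G.diam * (M * E) := by
    intro y
    obtain ⟨s, hs, hle⟩ := exists_path_sq_sub_le hconn h x y
    refine hle.trans (mul_le_mul_of_nonneg_left ?_ (Nat.cast_nonneg _))
    calc ∑ e ∈ s, (h e.2 - h e.1) ^ 2
        ≤ ∑ e ∈ s, M * (π e.1 * R e.1 e.2 * (h e.2 - h e.1) ^ 2) := by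
          refine Finset.sum_le_sum fun e he => ?_
          have hR : 0 < R e.1 e.2 := ((hAdj _ _).1 (hs e he)).2
          have hpos : 0 < π e.1 * R e.1 e.2 := mul_pos (hπpos _) hR
          have h1 : 1 ≤ M * (π e.1 * R e.1 e.2) :=
            (inv_le_iff_one_le_mul₀ hpos).1 (le_csSup hbdd ⟨e.1, e.2, hR, rfl⟩)
          rw [← mul_assoc]
          exact le_mul_of_one_le_left (sq_nonneg _) h1
      _ ≤ M * E := by
          rw [← Finset.mul_sum, hE']
          exact mul_le_mul_of_nonneg_left
            (Finset.sum_le_univ_sum_of_nonneg hw) hM0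
  calc ∑ y, π y * (h y - h x) ^ 2
      ≤ ∑ y, π y * (G.diam * (M * E)) :=
        Finset.sum_le_sum fun y _ => mul_le_mul_of_nonneg_left (key y) (hπpos y).le
    _ = 2 * (G.diam * M) * (1 / 2 * E) := by
        rw [← Finset.sum_mul, hπsum]
        ring
end

section
/- For every probability measure μ on X: ℐ'(μ) < ∞ if and only if ℐ(μ) = 0. -/
/-!
Only the representing weights matter. A Donsker–Varadhan supremum over a finite state space is
bounded by the total jump intensity, so `ℐ'(μ) < ∞` says exactly that `μ` is a mixture of the
`π'_m`, while `ℐ(μ) = 0` says that `μ = ∑ ω_j π_j` with `∑ ω_j (Lh)(j)/h(j) ≥ 0` for all `h > 0`.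

The latter condition is equivalent to stationarity of `ω`. If `ω` is stationary, `x - 1 ≥ log x`
bounds the sum below by `∑ ω_j (L log h)(j) = 0` (`sum_nonneg_of_stationary`); conversely, test
functions equal to `1` off a single point force balance at that point
(`stationary_of_sum_nonneg`).

Finally, the stationary probability vectors are exactly the mixtures of the `M_m`. A nonnegative
stationary vector is supported on closed irreducible classes, because no mass flows into a closed
set from outside (`closed_backward`). On each class it is a multiple of `M_m`: subtracting the
largest multiple that keeps the difference nonnegative leaves a nonnegative stationary vector with
a zero, and positivity propagates along positive jump rates (`pos_of_path`).
-/

open Filter MeasureTheory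
open scoped ENNReal

/-! ### Zero rate and the balance equations -/

/-- Balance equations: at every state the inflow under `ω` equals the outflow. No sign or
normalisation is imposed on `ω`. -/
def StationaryVec {n : ℕ} (r : Fin n → Fin n → ℝ) (ω : Fin n → ℝ) : Prop :=
  ∀ k, ∑ j, ω j * r j k = ω k * ∑ j, r k j

section Chain

variable {n : ℕ} {r : Fin n → Fin n → ℝ} {ω : Fin n → ℝ}

/-- The variational sum as a double sum over jumps. -/
lemma gen_sum_eq (h : Fin n → ℝ) (hh : ∀ j, 0 < h j) :
    ∑ j, ω j * (∑ k, r j k * (h k - h j)) / h j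
      = ∑ j, ∑ k, ω j * r j k * (h k / h j - 1) := by
  refine Finset.sum_congr rfl fun j _ => ?_
  rw [Finset.mul_sum, Finset.sum_div]
  refine Finset.sum_congr rfl fun k _ => ?_
  have := (hh j).ne'
  field_simp

lemma gen_bddAbove (hr : ∀ j k, 0 ≤ r j k) (hω : ∀ j, 0 ≤ ω j) :
    BddAbove (Set.range fun h : {h : Fin n → ℝ // ∀ j, 0 < h j} =>
      -∑ j, ω j * (∑ k, r j k * (h.1 k - h.1 j)) / h.1 j) := by
  refine ⟨∑ j, ∑ k, ω j * r j k, ?_⟩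
  rintro _ ⟨⟨h, hh⟩, rfl⟩
  simp only
  rw [gen_sum_eq h hh, ← Finset.sum_neg_distrib]
  refine Finset.sum_le_sum fun j _ => ?_
  rw [← Finset.sum_neg_distrib]
  refine Finset.sum_le_sum fun k _ => ?_
  have h1 := mul_nonneg (hω j) (hr j k)
  have h2 : 0 ≤ h k / h j := (div_pos (hh k) (hh j)).le
  nlinarith [mul_nonneg h1 h2]

lemma sum_nonneg_of_stationary (hr : ∀ j k, 0 ≤ r j k) (hω : ∀ j, 0 ≤ ω j)
    (hs : StationaryVec r ω) (h : Fin n → ℝ) (hh : ∀ j, 0 < h j) :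
    0 ≤ ∑ j, ω j * (∑ k, r j k * (h k - h j)) / h j := by
  rw [gen_sum_eq h hh]
  have key : ∑ j, ∑ k, ω j * r j k * (Real.log (h k) - Real.log (h j)) = 0 := by
    simp only [mul_sub, Finset.sum_sub_distrib]
    rw [Finset.sum_comm, sub_eq_zero]
    refine Finset.sum_congr rfl fun k _ => ?_
    rw [← Finset.sum_mul, ← Finset.sum_mul, hs k, Finset.mul_sum]
  rw [← key]
  refine Finset.sum_le_sum fun j _ => Finset.sum_le_sum fun k _ => ?_
  refine mul_le_mul_of_nonneg_left ?_ (mul_nonneg (hω j) (hr j k))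
  rw [← Real.log_div (hh k).ne' (hh j).ne']
  exact Real.log_le_sub_one_of_pos (div_pos (hh k) (hh j))

/-- Equality case of the bound `A y + B / y ≥ A + B` being valid for all `y > 0`. -/
lemma eq_of_forall_balance {A B : ℝ} (hA : 0 ≤ A) (hB : 0 ≤ B)
    (h : ∀ y : ℝ, 0 < y → 0 ≤ A * (y - 1) + B * (1 / y - 1)) : A = B := by
  have h' : ∀ y : ℝ, 0 < y → 0 ≤ (y - 1) * (A * y - B) := by
    intro y hy
    have e : (y - 1) * (A * y - B) = y * (A * (y - 1) + B * (1 / y - 1)) := by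
      field_simp
      ring
    rw [e]
    exact mul_nonneg hy.le (h y hy)
  -- In each case `y` lies strictly between `1` and the second root `B / A` of the quadratic
  -- (read as `+∞` when `A = 0`).
  rcases lt_trichotomy A B with hlt | heq | hgt
  · exfalso
    have hAB : 0 < A + B := by linarith
    have h1 := h' (2 * B / (A + B)) (div_pos (by linarith) hAB)
    have e : (2 * B / (A + B) - 1) * (A * (2 * B / (A + B)) - B)
        = -(B * ((B - A) / (A + B)) ^ 2) := by
      field_simp
      ring
    rw [e] at h1
    have : 0 < B * ((B - A) / (A + B)) ^ 2 :=
      mul_pos (by linarith) (pow_pos (div_pos (by linarith) hAB) 2)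
    linarith
  · exact heq
  · exfalso
    have hA' : 0 < A := by linarith
    have h1 := h' ((A + B) / (2 * A)) (div_pos (by linarith) (by linarith))
    have e : ((A + B) / (2 * A) - 1) * (A * ((A + B) / (2 * A)) - B)
        = -((A - B) ^ 2 / (4 * A)) := by
      field_simp
      ring
    rw [e] at h1
    have : 0 < (A - B) ^ 2 / (4 * A) :=
      div_pos (pow_pos (by linarith) 2) (by linarith)
    linarith

lemma stationary_of_sum_nonneg (hr : ∀ j k, 0 ≤ r j k) (hd : ∀ j, r j j = 0)
    (hω : ∀ j, 0 ≤ ω j)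
    (H : ∀ h : Fin n → ℝ, (∀ j, 0 < h j) →
      0 ≤ ∑ j, ω j * (∑ k, r j k * (h k - h j)) / h j) :
    StationaryVec r ω := by
  intro l
  refine eq_of_forall_balance
    (Finset.sum_nonneg fun j _ => mul_nonneg (hω j) (hr j l))
    (mul_nonneg (hω l) (Finset.sum_nonneg fun j _ => hr l j)) fun y hy => ?_
  have hh : ∀ j, 0 < (if j = l then y else 1 : ℝ) := by
    intro j
    split_ifs
    · exact hy
    · exact one_pos
  have h1 := H (fun j => if j = l then y else 1) hh
  rw [gen_sum_eq _ hh] at h1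
  -- Only jumps into `l` and out of `l` contribute; the diagonal rate vanishes.
  have e : ∀ j k, ω j * r j k * ((if k = l then y else 1) / (if j = l then y else 1) - 1)
      = (if k = l then ω j * r j k * (y - 1) else 0)
        + (if j = l then ω j * r j k * (1 / y - 1) else 0) := by
    intro j k
    by_cases hj : j = l <;> by_cases hk : k = l <;> simp [hj, hk, hd]
  simp only [e, Finset.sum_add_distrib] at h1
  rw [Finset.sum_comm (f := fun j k => if j = l then ω j * r j k * (1 / y - 1) else 0)] at h1
  simp only [Finset.sum_ite_eq', Finset.mem_univ, if_true] at h1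
  rwa [← Finset.sum_mul, ← Finset.sum_mul, ← Finset.mul_sum] at h1

/-! ### Support of stationary vectors -/

lemma pos_of_step (hr : ∀ j k, 0 ≤ r j k) (hω : ∀ j, 0 ≤ ω j) (hs : StationaryVec r ω)
    {j k : Fin n} (hj : 0 < ω j) (hjk : 0 < r j k) : 0 < ω k := by
  refine (hω k).lt_of_ne' fun h0 => ?_
  have h1 := hs k
  rw [h0, zero_mul] at h1
  have h2 := (Finset.sum_eq_zero_iff_of_nonneg
    (fun i _ => mul_nonneg (hω i) (hr i k))).1 h1 j (Finset.mem_univ j)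
  exact (mul_pos hj hjk).ne' h2

lemma pos_of_path (hr : ∀ j k, 0 ≤ r j k) (hω : ∀ j, 0 ≤ ω j) (hs : StationaryVec r ω)
    {j k : Fin n} (hj : 0 < ω j) (hjk : Relation.ReflTransGen (fun p q => 0 < r p q) j k) :
    0 < ω k := by
  induction hjk with
  | refl => exact hj
  | tail _ h ih => exact pos_of_step hr hω hs ih h

/-- A charged state that can jump into a closed set `D` belongs to `D`: summing the balance
equations over `D`, the inflow into `D` equals its outflow, which is zero. -/
lemma closed_backward (hr : ∀ j k, 0 ≤ r j k) (hω : ∀ j, 0 ≤ ω j) (hs : StationaryVec r ω)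
    (D : Finset (Fin n)) (hD : ∀ j ∈ D, ∀ k, k ∉ D → r j k = 0)
    {i d : Fin n} (hi : 0 < ω i) (hid : 0 < r i d) (hd : d ∈ D) : i ∈ D := by
  by_contra hiD
  have h1 : ∑ k ∈ D, ∑ j, ω j * r j k = ∑ k ∈ D, ∑ j, ω k * r k j :=
    Finset.sum_congr rfl fun k _ => by rw [hs k, Finset.mul_sum]
  have h2 : ∑ k ∈ D, ∑ j, ω k * r k j = ∑ k ∈ D, ∑ j ∈ D, ω k * r k j := by
    refine Finset.sum_congr rfl fun k hk => ?_
    symm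
    refine Finset.sum_subset (Finset.subset_univ D) fun j _ hj => ?_
    rw [hD k hk j hj, mul_zero]
  have h3 : ∑ k ∈ D, ∑ j, ω j * r j k
      = ∑ k ∈ D, ∑ j ∈ D, ω j * r j k + ∑ k ∈ D, ∑ j ∈ Dᶜ, ω j * r j k := by
    rw [← Finset.sum_add_distrib]
    exact Finset.sum_congr rfl fun k _ => (Finset.sum_add_sum_compl D _).symm
  have h4 : ∑ k ∈ D, ∑ j ∈ D, ω k * r k j = ∑ k ∈ D, ∑ j ∈ D, ω j * r j k :=
    Finset.sum_comm
  have h5 : ∑ k ∈ D, ∑ j ∈ Dᶜ, ω j * r j k = 0 := by linarith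
  have hnn : ∀ j k, 0 ≤ ω j * r j k := fun j k => mul_nonneg (hω j) (hr j k)
  have h6 := (Finset.sum_eq_zero_iff_of_nonneg
    (fun k _ => Finset.sum_nonneg fun j _ => hnn j k)).1 h5 d hd
  have h7 := (Finset.sum_eq_zero_iff_of_nonneg (fun j _ => hnn j d)).1 h6 i
    (Finset.mem_compl.2 hiD)
  exact (mul_pos hi hid).ne' h7

lemma mem_closed_of_path {D : Finset (Fin n)}
    (hD : ∀ j ∈ D, ∀ k, k ∉ D → r j k = 0) {j k : Fin n} (hj : j ∈ D)
    (hjk : Relation.ReflTransGen (fun p q => 0 < r p q) j k) : k ∈ D := by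
  induction hjk with
  | refl => exact hj
  | tail _ h ih =>
    by_contra hc
    exact h.ne' (hD _ ih _ hc)

/-- A path starting in a closed set uses only states of that set. -/
lemma path_within {D : Finset (Fin n)}
    (hD : ∀ j ∈ D, ∀ k, k ∉ D → r j k = 0) {j k : Fin n} (hj : j ∈ D)
    (hjk : Relation.ReflTransGen (fun p q => 0 < r p q) j k) :
    Relation.ReflTransGen (fun p q => p ∈ D ∧ q ∈ D ∧ 0 < r p q) j k := by
  induction hjk with
  | refl => exact .refl
  | tail hp h ih =>
    exact ih.tail ⟨mem_closed_of_path hD hj hp, mem_closed_of_path hD hj (hp.tail h), h⟩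

/-- A state charged by a stationary vector is recurrent: the set of states it reaches is a closed
irreducible class containing it. -/
lemma exists_class_of_pos (hr : ∀ j k, 0 ≤ r j k) (hω : ∀ j, 0 ≤ ω j)
    (hs : StationaryVec r ω) {j : Fin n} (hj : 0 < ω j) :
    ∃ C : Finset (Fin n), j ∈ C ∧ (∀ p ∈ C, ∀ q, q ∉ C → r p q = 0) ∧
      ∀ p ∈ C, ∀ q ∈ C,
        Relation.ReflTransGen (fun p q => p ∈ C ∧ q ∈ C ∧ 0 < r p q) p q := by
  classical
  let reach : Fin n → Finset (Fin n) := fun i =>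
    Finset.univ.filter fun k => Relation.ReflTransGen (fun p q => 0 < r p q) i k
  have hmem : ∀ i k, k ∈ reach i ↔ Relation.ReflTransGen (fun p q => 0 < r p q) i k := by
    simp [reach]
  have hcl : ∀ i, ∀ p ∈ reach i, ∀ q, q ∉ reach i → r p q = 0 := by
    intro i p hp q hq
    by_contra hne
    exact hq ((hmem i q).2 (((hmem i p).1 hp).tail ((hr p q).lt_of_ne' hne)))
  -- Walking backwards along a path from `j` to `p` never leaves the closed set `reach p`.
  have hback : ∀ p ∈ reach j, Relation.ReflTransGen (fun p q => 0 < r p q) p j := by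
    intro p hp
    have hgen : ∀ q, Relation.ReflTransGen (fun p q => 0 < r p q) j q →
        q ∈ reach p → j ∈ reach p := by
      intro q hq
      induction hq with
      | refl => exact id
      | tail hjb hbc ih =>
        exact fun hc => ih (closed_backward hr hω hs _ (hcl p)
          (pos_of_path hr hω hs hj hjb) hbc hc)
    exact (hmem p j).1 (hgen p ((hmem j p).1 hp) ((hmem p p).2 .refl))
  exact ⟨reach j, (hmem j j).2 .refl, hcl j, fun p hp q hq =>
    path_within (hcl j) hp ((hback p hp).trans ((hmem j q).1 hq))⟩

/-! ### Uniqueness on a closed irreducible class -/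

/-- Extension by zero of a stationary vector of the chain restricted to a closed set. -/
lemma stationary_extend {D : Finset (Fin n)} {m : Fin n → ℝ}
    (hD : ∀ j ∈ D, ∀ k, k ∉ D → r j k = 0)
    (hm : ∀ k ∈ D, ∑ j ∈ D, m j * r j k = m k * ∑ j ∈ D, r k j) :
    StationaryVec r (fun j => if j ∈ D then m j else 0) := by
  intro k
  have e : ∑ j, (if j ∈ D then m j else 0) * r j k = ∑ j ∈ D, m j * r j k := by
    simp [ite_mul, Finset.sum_ite_mem]
  simp only
  rw [e]
  by_cases hk : k ∈ D
  · rw [hm k hk, if_pos hk]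
    congr 1
    exact Finset.sum_subset (Finset.subset_univ D) fun j _ hj => hD k hk j hj
  · rw [if_neg hk, zero_mul]
    exact Finset.sum_eq_zero fun j hj => by rw [hD j hj k hk, mul_zero]

/-- On a closed irreducible class every nonnegative stationary vector is a nonnegative multiple
of the stationary law of the class. -/
lemma exists_mul_on_class (hr : ∀ j k, 0 ≤ r j k) (hω : ∀ j, 0 ≤ ω j)
    (hs : StationaryVec r ω) {D : Finset (Fin n)} {m : Fin n → ℝ}
    (hne : D.Nonempty) (hD : ∀ j ∈ D, ∀ k, k ∉ D → r j k = 0)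
    (hirr : ∀ j ∈ D, ∀ k ∈ D,
      Relation.ReflTransGen (fun p q => p ∈ D ∧ q ∈ D ∧ 0 < r p q) j k)
    (hm0 : ∀ k ∈ D, 0 ≤ m k) (hm1 : ∑ k ∈ D, m k = 1)
    (hm : ∀ k ∈ D, ∑ j ∈ D, m j * r j k = m k * ∑ j ∈ D, r k j) :
    ∃ c : ℝ, 0 ≤ c ∧ ∀ j ∈ D, ω j = c * m j := by
  have hirr' : ∀ j ∈ D, ∀ k ∈ D, Relation.ReflTransGen (fun p q => 0 < r p q) j k :=
    fun j hj k hk => Relation.ReflTransGen.mono (fun _ _ h => h.2.2) _ _ (hirr j hj k hk)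
  have hext := stationary_extend hD hm
  have hext0 : ∀ j, 0 ≤ (if j ∈ D then m j else 0) := by
    intro j
    split_ifs with h
    · exact hm0 j h
    · exact le_rfl
  have hmpos : ∀ k ∈ D, 0 < m k := by
    obtain ⟨i, hi, hip⟩ : ∃ i ∈ D, 0 < m i := by
      by_contra! hcon
      have := Finset.sum_nonpos hcon
      linarith
    intro k hk
    have := pos_of_path hr hext0 hext (j := i) (by simpa [hi] using hip) (hirr' i hi k hk)
    simpa [hk] using this
  obtain ⟨j0, hj0, hmin⟩ := Finset.exists_min_image D (fun j => ω j / m j) hne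
  refine ⟨ω j0 / m j0, div_nonneg (hω j0) (hmpos j0 hj0).le, fun k hk => ?_⟩
  set c := ω j0 / m j0 with hc
  let v : Fin n → ℝ := fun j => ω j - c * (if j ∈ D then m j else 0)
  have hv0 : ∀ j, 0 ≤ v j := by
    intro j
    by_cases hj : j ∈ D
    · have := (le_div_iff₀ (hmpos j hj)).1 (hmin j hj)
      simp only [v, if_pos hj]
      linarith
    · simpa [v, hj] using hω j
  have hvs : StationaryVec r v := by
    intro l
    have h1 := hs l
    have h2 := hext l
    simp only [v, sub_mul, Finset.sum_sub_distrib, mul_assoc, ← Finset.mul_sum] at h2 ⊢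
    rw [h1, h2]
  have hvj0 : v j0 = 0 := by
    have := (hmpos j0 hj0).ne'
    simp only [v, if_pos hj0, hc]
    field_simp
    ring
  have hvk : v k = 0 := by
    by_contra hne'
    exact (pos_of_path hr hv0 hvs ((hv0 k).lt_of_ne' hne') (hirr' k hk j0 hj0)).ne' hvj0
  simp only [v, if_pos hk] at hvk
  linarith

end Chain

/-! ### Mixtures of class laws -/

/-- Regrouping a mixture of class mixtures as a mixture over the original states. -/
lemma mixture_eq {n u : ℕ} {X : Type} [MeasurableSpace X] (Rc : Fin u → Finset (Fin n))
    (M : Fin u → Fin n → ℝ) (hM : ∀ a, ∀ k ∈ Rc a, 0 ≤ M a k) (c : Fin u → ℝ)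
    (hc : ∀ a, 0 ≤ c a) (P : Fin n → Measure X) :
    ∑ a, ENNReal.ofReal (c a) • (∑ k ∈ Rc a, ENNReal.ofReal (M a k) • P k)
      = ∑ j, ENNReal.ofReal (∑ a, if j ∈ Rc a then c a * M a j else 0) • P j := by
  have hnn : ∀ a j, 0 ≤ (if j ∈ Rc a then c a * M a j else 0) := by
    intro a j
    split_ifs with h
    · exact mul_nonneg (hc a) (hM a j h)
    · exact le_rfl
  have e : ∀ j, ENNReal.ofReal (∑ a, if j ∈ Rc a then c a * M a j else 0) • P j
      = ∑ a, ENNReal.ofReal (if j ∈ Rc a then c a * M a j else 0) • P j := by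
    intro j
    rw [ENNReal.ofReal_sum_of_nonneg fun a _ => hnn a j, Finset.sum_smul]
  simp only [e]
  rw [Finset.sum_comm]
  refine Finset.sum_congr rfl fun a _ => ?_
  rw [Finset.smul_sum, ← Finset.sum_subset (Finset.subset_univ (Rc a))]
  · refine Finset.sum_congr rfl fun k hk => ?_
    rw [if_pos hk, ENNReal.ofReal_mul (hc a), mul_smul]
  · intro j _ hj
    rw [if_neg hj, ENNReal.ofReal_zero, zero_smul]

lemma mixture_mass {n u : ℕ} (Rc : Fin u → Finset (Fin n)) (M : Fin u → Fin n → ℝ)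
    (hM : ∀ a, ∑ k ∈ Rc a, M a k = 1) (c : Fin u → ℝ) :
    ∑ j, ∑ a, (if j ∈ Rc a then c a * M a j else 0) = ∑ a, c a := by
  rw [Finset.sum_comm]
  refine Finset.sum_congr rfl fun a _ => ?_
  rw [Finset.sum_ite_mem, Finset.univ_inter, ← Finset.mul_sum, hM a, mul_one]

/-! ### Zeros of the rate function -/

/-- `ℐ'(μ) < ∞` if and only if `ℐ(μ) = 0`, where `ℐ` (resp. `ℐ'`) is the
functional equal to the level-two rate functional `𝕀(ω)` (resp. `𝕀'(ϑ)`) when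
`μ = Σ_j ω_j π_j` (resp. `μ = Σ_m ϑ_m π'_m`) and `+∞` otherwise. -/
theorem stmt10
    (s : ℕ) (r : Fin s → Fin s → ℝ) (hrnn : ∀ j k, 0 ≤ r j k)
    (hrdiag : ∀ j, r j j = 0)
    (u : ℕ) (Rc : Fin u → Finset (Fin s))
    (hRc : ∀ a, (Rc a).Nonempty ∧
      (∀ j ∈ Rc a, ∀ k, k ∉ Rc a → r j k = 0) ∧
      (∀ j ∈ Rc a, ∀ k ∈ Rc a,
        Relation.ReflTransGen (fun p q => p ∈ Rc a ∧ q ∈ Rc a ∧ 0 < r p q) j k))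
    (hRcinj : Function.Injective Rc)
    (hRcall : ∀ C : Finset (Fin s),
      (C.Nonempty ∧ (∀ j ∈ C, ∀ k, k ∉ C → r j k = 0) ∧
        (∀ j ∈ C, ∀ k ∈ C,
          Relation.ReflTransGen (fun p q => p ∈ C ∧ q ∈ C ∧ 0 < r p q) j k)) →
      ∃ a, C = Rc a)
    (M : Fin u → Fin s → ℝ)
    (hMnn : ∀ a, ∀ k ∈ Rc a, 0 ≤ M a k)
    (hMsum : ∀ a, ∑ k ∈ Rc a, M a k = 1)
    (hMstat : ∀ a, ∀ k ∈ Rc a,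
      ∑ j ∈ Rc a, M a j * r j k = M a k * ∑ j ∈ Rc a, r k j)
    (X : Type) [TopologicalSpace X] [PolishSpace X]
    [MeasurableSpace X] [BorelSpace X]
    (N : ℕ) (x : Fin N → X) (hx : Function.Injective x)
    (T : Fin s → Finset (Fin N)) (hTne : ∀ j, (T j).Nonempty)
    (hTdisj : ∀ j k : Fin s, j ≠ k → Disjoint (T j) (T k))
    (mz : Fin s → Fin N → ℝ)
    (hmz : ∀ j, ∀ i ∈ T j, 0 < mz j i)
    (hmzsum : ∀ j, ∑ i ∈ T j, mz j i = 1)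
    (r' : Fin u → Fin u → ℝ) (hr'nn : ∀ a b, 0 ≤ r' a b)
    (hr'diag : ∀ a, r' a a = 0)
    (I I' : Measure X → ℝ≥0∞)
    (hI : ∀ μ : Measure X,
      (∀ ω : Fin s → ℝ, (∀ j, 0 ≤ ω j) → (∑ j, ω j = 1) →
        μ = ∑ j : Fin s, ENNReal.ofReal (ω j) •
              (∑ i ∈ T j, ENNReal.ofReal (mz j i) • Measure.dirac (x i)) →
        I μ = ENNReal.ofReal
          (⨆ h : {h : Fin s → ℝ // ∀ j, 0 < h j},
            -∑ j : Fin s, ω j * (∑ k : Fin s, r j k * (h.1 k - h.1 j)) / h.1 j)) ∧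
      ((¬ ∃ ω : Fin s → ℝ, (∀ j, 0 ≤ ω j) ∧ (∑ j, ω j = 1) ∧
          μ = ∑ j : Fin s, ENNReal.ofReal (ω j) •
              (∑ i ∈ T j, ENNReal.ofReal (mz j i) • Measure.dirac (x i))) →
        I μ = ⊤))
    (hI' : ∀ μ : Measure X,
      (∀ ϑ : Fin u → ℝ, (∀ a, 0 ≤ ϑ a) → (∑ a, ϑ a = 1) →
        μ = ∑ a : Fin u, ENNReal.ofReal (ϑ a) •
              (∑ k ∈ Rc a, ENNReal.ofReal (M a k) •
                (∑ i ∈ T k, ENNReal.ofReal (mz k i) • Measure.dirac (x i))) →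
        I' μ = ENNReal.ofReal
          (⨆ h : {h : Fin u → ℝ // ∀ a, 0 < h a},
            -∑ a : Fin u, ϑ a * (∑ b : Fin u, r' a b * (h.1 b - h.1 a)) / h.1 a)) ∧
      ((¬ ∃ ϑ : Fin u → ℝ, (∀ a, 0 ≤ ϑ a) ∧ (∑ a, ϑ a = 1) ∧
          μ = ∑ a : Fin u, ENNReal.ofReal (ϑ a) •
              (∑ k ∈ Rc a, ENNReal.ofReal (M a k) •
                (∑ i ∈ T k, ENNReal.ofReal (mz k i) • Measure.dirac (x i)))) →
        I' μ = ⊤))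
    (μ : Measure X) (hμ : IsProbabilityMeasure μ) :
    I' μ < ⊤ ↔ I μ = 0 := by
  constructor
  · intro hfin
    obtain ⟨c, hc0, hc1, hrep⟩ : ∃ ϑ : Fin u → ℝ, (∀ a, 0 ≤ ϑ a) ∧ (∑ a, ϑ a = 1) ∧
          μ = ∑ a : Fin u, ENNReal.ofReal (ϑ a) •
              (∑ k ∈ Rc a, ENNReal.ofReal (M a k) •
                (∑ i ∈ T k, ENNReal.ofReal (mz k i) • Measure.dirac (x i))) := by
      by_contra hcon
      exact hfin.ne ((hI' μ).2 hcon)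
    rw [mixture_eq Rc M hMnn c hc0] at hrep
    have hω0 : ∀ j, 0 ≤ ∑ a, (if j ∈ Rc a then c a * M a j else 0) := by
      refine fun j => Finset.sum_nonneg fun a _ => ?_
      split_ifs with h
      · exact mul_nonneg (hc0 a) (hMnn a j h)
      · exact le_rfl
    have hst : StationaryVec r (fun j => ∑ a, (if j ∈ Rc a then c a * M a j else 0)) := by
      intro k
      have h1 := fun a => stationary_extend (hRc a).2.1 (hMstat a) k
      simp only [Finset.sum_mul] at h1 ⊢
      rw [Finset.sum_comm]
      refine Finset.sum_congr rfl fun a _ => ?_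
      have h2 := congrArg (fun z => c a * z) (h1 a)
      simp only [Finset.mul_sum, ← mul_assoc, mul_ite, mul_zero] at h2
      simpa only [Finset.mul_sum] using h2
    rw [(hI μ).1 _ hω0 ((mixture_mass Rc M hMsum c).trans hc1) hrep,
      ENNReal.ofReal_eq_zero]
    exact Real.iSup_nonpos fun h =>
      neg_nonpos.2 (sum_nonneg_of_stationary hrnn hω0 hst h.1 h.2)
  · intro hzero
    obtain ⟨ω, hω0, hω1, hrep⟩ : ∃ ω : Fin s → ℝ, (∀ j, 0 ≤ ω j) ∧ (∑ j, ω j = 1) ∧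
          μ = ∑ j : Fin s, ENNReal.ofReal (ω j) •
              (∑ i ∈ T j, ENNReal.ofReal (mz j i) • Measure.dirac (x i)) := by
      by_contra hcon
      rw [(hI μ).2 hcon] at hzero
      exact ENNReal.top_ne_zero hzero
    rw [(hI μ).1 ω hω0 hω1 hrep, ENNReal.ofReal_eq_zero] at hzero
    have hst : StationaryVec r ω := by
      refine stationary_of_sum_nonneg hrnn hrdiag hω0 fun h hh => ?_
      -- Boundedness makes the real supremum a genuine one rather than the default value `0`.
      have := (le_ciSup (gen_bddAbove hrnn hω0) ⟨h, hh⟩).trans hzero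
      simpa using this
    have hcls : ∀ a, ∃ c : ℝ, 0 ≤ c ∧ ∀ j ∈ Rc a, ω j = c * M a j := fun a =>
      exists_mul_on_class hrnn hω0 hst (hRc a).1 (hRc a).2.1 (hRc a).2.2 (hMnn a)
        (hMsum a) (hMstat a)
    choose c hc0 hc using hcls
    have hsub : ∀ a b j, j ∈ Rc a → j ∈ Rc b → Rc a ⊆ Rc b := fun a b j ha hb k hk =>
      mem_closed_of_path (hRc b).2.1 hb
        (Relation.ReflTransGen.mono (fun _ _ h => h.2.2) _ _ ((hRc a).2.2 j ha k hk))
    have hωeq : ω = fun j => ∑ a, (if j ∈ Rc a then c a * M a j else 0) := by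
      funext j
      by_cases hj : ∃ a, j ∈ Rc a
      · obtain ⟨a, ha⟩ := hj
        rw [Finset.sum_eq_single a, if_pos ha, hc a j ha]
        · intro b _ hba
          refine if_neg fun hb => hba ?_
          exact hRcinj ((hsub b a j hb ha).antisymm (hsub a b j ha hb))
        · exact fun h => absurd (Finset.mem_univ a) h
      · push Not at hj
        rw [Finset.sum_eq_zero fun a _ => if_neg (hj a)]
        by_contra hne
        obtain ⟨C, hjC, hcl, hirr⟩ :=
          exists_class_of_pos hrnn hω0 hst ((hω0 j).lt_of_ne' hne)
        obtain ⟨a, rfl⟩ := hRcall C ⟨⟨j, hjC⟩, hcl, hirr⟩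
        exact hj a hjC
    have hc1 : ∑ a, c a = 1 := by
      rw [← mixture_mass Rc M hMsum c, ← hω1, hωeq]
    rw [hωeq, ← mixture_eq Rc M hMnn c hc0] at hrep
    rw [(hI' μ).1 c hc0 hc1 hrep]
    exact ENNReal.ofReal_lt_top
end

section
/- For every probability measure μ on 𝕋^d and every sequence of probability measures μ_n on Ξ_n converging weakly to μ, liminf_{n→∞} ℐ_n(μ_n) ≥ J(μ). -/
/-!
The Donsker–Varadhan variational formula gives `ℐ_n(μ) ≥ -∑ₓ μ(x) (L_n u)(x) / u(x)` for every
positive `u`, where `L_n` is the generator with rates `R_n`. For `u = e^{nF/2}` one has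
`R_n(x,y) u(y)/u(x) = 1` for neighbours, so `ℐ_n(μ) ≥ ∑ₓ μ(x) ∑_{y ~ x} (R_n(x,y) - 1)`. This bound
is obtained here edge by edge: with `r = R_n(x,y)`, so that `R_n(y,x) = r⁻¹`, the contribution of
the edge minus `μ(x) (r - 1) + μ(y) (r⁻¹ - 1)` is the square `π_n(x) (√(μ(x)/π_n(x)) - r √(μ(y)/π_n(y)))²`
(`edge_lower`, summed in `IT_lower`).

For `n ≥ 3` the neighbours of `x` are the `2d` distinct points `x ± eᵢ/n` modulo `ℤ^d`
(`sum_nbr`), so the bound reads `∑ₓ μ_n(x) H_n(x)` with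
`H_n(x) = ∑ᵢ ∑_{s = ±1} (e^{-(n/2)(F(x + s eᵢ/n) - F(x))} - 1)`. By the mean value theorem and
uniform continuity of `∂ᵢF` on compact sets, `H_n → G` uniformly on the unit cube
(`H_uniform`). Since `G` is continuous and periodic, weak convergence yields
`∑ₓ μ_n(x) H_n(x) → ∫ G dμ`, and the liminf inequality follows.
-/

open Filter MeasureTheory
open scoped ENNReal Classical

noncomputable section

/-- Discretization of the torus `𝕋^d = ℝ^d/ℤ^d`: the points `k/n`, `k ∈ {0,…,n-1}^d`,
taken as representatives in the fundamental domain `[0,1)^d`. -/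
def XiT (d n : ℕ) : Finset (Fin d → ℝ) :=
  (Finset.univ : Finset (Fin d → Fin n)).image fun k i => (k i : ℝ) / n

/-- `x` and `y` are nearest neighbours of the discretized torus: `y - x ≡ ±eᵢ/n mod ℤ^d`. -/
def NbrT (d n : ℕ) (x y : Fin d → ℝ) : Prop :=
  ∃ i : Fin d, ∃ s : ℝ, (s = 1 ∨ s = -1) ∧ ∃ v : Fin d → ℤ,
    ∀ j, y j = x j + (if j = i then s / n else 0) + (v j : ℝ)

/-- Partition function `Z_{F,n}`. -/
def ZT (d : ℕ) (F : (Fin d → ℝ) → ℝ) (n : ℕ) : ℝ :=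
  ∑ x ∈ XiT d n, Real.exp (-(n : ℝ) * F x)

/-- Stationary measure `π_n(x) = e^{-nF(x)}/Z_{F,n}`. -/
def piT (d : ℕ) (F : (Fin d → ℝ) → ℝ) (n : ℕ) (x : Fin d → ℝ) : ℝ :=
  Real.exp (-(n : ℝ) * F x) / ZT d F n

/-- Jump rates `R_n(x,y) = e^{-(n/2)(F(y)-F(x))}` for nearest neighbours, `0` otherwise. -/
def RT (d : ℕ) (F : (Fin d → ℝ) → ℝ) (n : ℕ) (x y : Fin d → ℝ) : ℝ :=
  if NbrT d n x y then Real.exp (-((n : ℝ) / 2) * (F y - F x)) else 0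

/-- Level-two large deviations rate functional `ℐ_n`. -/
def IT (d : ℕ) (F : (Fin d → ℝ) → ℝ) (n : ℕ) (μ : (Fin d → ℝ) → ℝ) : ℝ :=
  (1 / 2) * ∑ x ∈ XiT d n, ∑ y ∈ (XiT d n).erase x,
    piT d F n x * RT d F n x y *
      (Real.sqrt (μ y / piT d F n y) - Real.sqrt (μ x / piT d F n x)) ^ 2

/-- The function `G(x) = Σᵢ 2(cosh(∂ᵢF(x)/2) - 1)`. -/
def GT (d : ℕ) (F : (Fin d → ℝ) → ℝ) (x : Fin d → ℝ) : ℝ :=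
  ∑ i : Fin d, 2 * (Real.cosh (fderiv ℝ F x (Pi.single i 1) / 2) - 1)

/-- A function on `ℝ^d` is `ℤ^d`-periodic, i.e. well defined on the torus. -/
def PerT (d : ℕ) (g : (Fin d → ℝ) → ℝ) : Prop :=
  ∀ (x : Fin d → ℝ) (v : Fin d → ℤ), g (fun i => x i + (v i : ℝ)) = g x

/-- The (Euclidean) torus distance. -/
def tdistT (d : ℕ) (x y : Fin d → ℝ) : ℝ :=
  ⨅ v : Fin d → ℤ, Real.sqrt (∑ i, (x i - y i - (v i : ℝ)) ^ 2)

/-- Membership in the (torus) cube of side `ε` centered at `z`. -/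
def InCubeT (d : ℕ) (ε : ℝ) (z x : Fin d → ℝ) : Prop :=
  ∃ v : Fin d → ℤ, ∀ i, |x i - z i - (v i : ℝ)| ≤ ε / 2

/-- The discretized cube `Q^n_ε(z) = Q_ε(z) ∩ Ξ_n`. -/
def QT (d : ℕ) (ε : ℝ) (z : Fin d → ℝ) (n : ℕ) : Finset (Fin d → ℝ) :=
  (XiT d n).filter (InCubeT d ε z)

/-- The Hessian matrix of `F` at `x`. -/
def HessT (d : ℕ) (F : (Fin d → ℝ) → ℝ) (x : Fin d → ℝ) : Matrix (Fin d) (Fin d) ℝ :=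
  Matrix.of fun i j => fderiv ℝ (fun y => fderiv ℝ F y (Pi.single j 1)) x (Pi.single i 1)

/-! ### Neighbours in the discretized torus -/

/-- The representative in `[0,1)^d` of a point of the torus. -/
def wrapT (d : ℕ) (z : Fin d → ℝ) : Fin d → ℝ := fun j => Int.fract (z j)

/-- The sign `±1` encoded by a Boolean. -/
def sgnT (b : Bool) : ℝ := if b then 1 else -1

/-- The unwrapped neighbour `x ± eᵢ/n` of `x`. -/
def stepT (d n : ℕ) (x : Fin d → ℝ) (p : Fin d × Bool) : Fin d → ℝ :=
  fun j => x j + (if j = p.1 then sgnT p.2 / n else 0)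

/-- The function `H_n`, the sum of `R_n(x,y) - 1` over the `2d` unwrapped neighbours of `x`. -/
def HT (d : ℕ) (F : (Fin d → ℝ) → ℝ) (n : ℕ) (x : Fin d → ℝ) : ℝ :=
  ∑ p : Fin d × Bool, (Real.exp (-((n : ℝ) / 2) * (F (stepT d n x p) - F x)) - 1)

lemma sgnT_cases (b : Bool) : sgnT b = 1 ∨ sgnT b = -1 := by
  cases b <;> simp [sgnT]

lemma mem_XiT {d n : ℕ} (hn : 0 < n) (x : Fin d → ℝ) :
    x ∈ XiT d n ↔ ∀ i, 0 ≤ x i ∧ x i < 1 ∧ ∃ k : ℤ, x i * n = k := by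
  have hn' : (0 : ℝ) < n := by exact_mod_cast hn
  simp only [XiT, Finset.mem_image, Finset.mem_univ, true_and]
  constructor
  · rintro ⟨k, rfl⟩ i
    refine ⟨by positivity, ?_, (k i : ℕ), ?_⟩
    · rw [div_lt_one hn']
      exact_mod_cast (k i).2
    · field_simp
      simp
  · intro h
    choose h0 h1 k hk using h
    have hk0 : ∀ i, 0 ≤ k i := fun i => by
      have : (0 : ℝ) ≤ k i := by rw [← hk]; exact mul_nonneg (h0 i) hn'.le
      exact_mod_cast this
    have hk1 : ∀ i, k i < n := fun i => by
      have : (k i : ℝ) < n := by rw [← hk]; nlinarith [h1 i]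
      exact_mod_cast this
    refine ⟨fun i => ⟨(k i).toNat, by have := hk0 i; have := hk1 i; omega⟩, ?_⟩
    funext i
    have h2 : (((k i).toNat : ℕ) : ℝ) = k i := by
      have : (((k i).toNat : ℕ) : ℤ) = k i := Int.toNat_of_nonneg (hk0 i)
      exact_mod_cast this
    simp only [h2]
    rw [div_eq_iff hn'.ne', hk]

lemma F_wrapT {d : ℕ} {F : (Fin d → ℝ) → ℝ} (hF : PerT d F) (z : Fin d → ℝ) :
    F (wrapT d z) = F z := by
  rw [← hF z (fun i => -⌊z i⌋)]
  congr 1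
  funext i
  simp [wrapT, Int.fract, sub_eq_add_neg]

/-- `s/n` is not an integer if `0 < |s| < n`; this separates the `2d` neighbours modulo `ℤ^d`. -/
lemma not_int_of_abs {n : ℕ} {s : ℝ} (hs : s ≠ 0) (hsn : |s| < n) (m : ℤ) (h : s / n = m) :
    False := by
  have hn' : (0 : ℝ) < n := (abs_nonneg s).trans_lt hsn
  rw [div_eq_iff hn'.ne'] at h
  have hm : m ≠ 0 := by
    rintro rfl
    simp at h
    exact hs h
  have h1 : (1 : ℝ) ≤ |(m : ℝ)| := by exact_mod_cast Int.one_le_abs hm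
  rw [h, abs_mul, abs_of_pos hn'] at hsn
  nlinarith

/-- For `n ≥ 3` the neighbours of `x` in `Ξ_n` are exactly the `2d` distinct points
`x ± eᵢ/n` modulo `ℤ^d`. -/
lemma sum_nbr {d n : ℕ} (hn : 3 ≤ n) {x : Fin d → ℝ} (hx : x ∈ XiT d n)
    (φ : (Fin d → ℝ) → ℝ) :
    ∑ y ∈ XiT d n, (if y ≠ x ∧ NbrT d n x y then φ y else 0) =
      ∑ p : Fin d × Bool, φ (wrapT d (stepT d n x p)) := by
  have hn0 : 0 < n := by omega
  have hn' : (3 : ℝ) ≤ n := by exact_mod_cast hn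
  have hnp : (0 : ℝ) < n := by linarith
  have hxX := (mem_XiT hn0 x).1 hx
  have hs1 : ∀ b, sgnT b ≠ 0 ∧ |sgnT b| < n := fun b => by
    rcases sgnT_cases b with h | h <;> rw [h] <;> norm_num <;> linarith
  rw [← Finset.sum_filter]
  symm
  refine Finset.sum_bij (fun p _ => wrapT d (stepT d n x p)) ?_ ?_ ?_ (fun _ _ => rfl)
  · rintro ⟨i, b⟩ -
    rw [Finset.mem_filter]
    refine ⟨(mem_XiT hn0 _).2 fun j => ⟨Int.fract_nonneg _, Int.fract_lt_one _, ?_⟩, ?_, ?_⟩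
    · obtain ⟨k, hk⟩ := (hxX j).2.2
      refine ⟨k + (if j = i then (if b then 1 else -1) else 0) - ⌊stepT d n x (i, b) j⌋ * n, ?_⟩
      simp only [wrapT, Int.fract, sub_mul]
      push_cast
      rw [← hk]
      congr 1
      simp only [stepT, sgnT]
      split_ifs <;> field_simp <;> ring
    · intro h
      have h1 := congrFun h i
      simp only [wrapT, Int.fract, stepT, if_true] at h1
      exact not_int_of_abs (hs1 b).1 (hs1 b).2 _ (by linarith : sgnT b / n = _)
    · refine ⟨i, sgnT b, sgnT_cases b, fun j => -⌊stepT d n x (i, b) j⌋, fun j => ?_⟩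
      simp only [wrapT, Int.fract]
      push_cast
      simp only [stepT]
      ring
  · rintro ⟨i, b⟩ - ⟨i', b'⟩ - h
    have hj : ∀ j, ∃ m : ℤ, stepT d n x (i, b) j - stepT d n x (i', b') j = m :=
      fun j => Int.fract_eq_fract.1 (congrFun h j)
    obtain ⟨m, hm⟩ := hj i
    by_cases hi : i = i'
    · subst hi
      simp only [stepT, if_true] at hm
      by_cases hb : b = b'
      · rw [hb]
      · exfalso
        refine not_int_of_abs (n := n) (s := sgnT b - sgnT b') ?_ ?_ m (by rw [← hm]; ring)
        · cases b <;> cases b' <;> simp [sgnT] at hb ⊢ <;> norm_num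
        · cases b <;> cases b' <;> simp [sgnT] at hb ⊢ <;> norm_num <;> linarith
    · simp only [stepT, if_true, if_neg hi] at hm
      exact (not_int_of_abs (hs1 b).1 (hs1 b).2 m (by rw [← hm]; ring)).elim
  · intro y hy
    rw [Finset.mem_filter] at hy
    obtain ⟨hyX, -, i, s, hs, v, hv⟩ := hy
    have hyX := (mem_XiT hn0 y).1 hyX
    obtain ⟨b, rfl⟩ : ∃ b, sgnT b = s := by
      rcases hs with rfl | rfl
      · exact ⟨true, by simp [sgnT]⟩
      · exact ⟨false, by simp [sgnT]⟩
    refine ⟨(i, b), Finset.mem_univ _, ?_⟩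
    funext j
    simp only [wrapT]
    rw [Int.fract_eq_iff]
    exact ⟨(hyX j).1, (hyX j).2.1, -v j, by rw [hv j]; push_cast; simp only [stepT]; ring⟩

lemma nbr_symm {d n : ℕ} {x y : Fin d → ℝ} (h : NbrT d n x y) : NbrT d n y x := by
  obtain ⟨i, s, hs, v, hv⟩ := h
  refine ⟨i, -s, ?_, fun j => -v j, fun j => ?_⟩
  · rcases hs with rfl | rfl <;> simp
  · rw [hv j]
    push_cast
    split_ifs <;> ring

/-! ### Lower bound for the rate functional -/

lemma ZT_pos {d n : ℕ} (hn : 0 < n) (F : (Fin d → ℝ) → ℝ) : 0 < ZT d F n := by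
  refine Finset.sum_pos (fun _ _ => Real.exp_pos _) ⟨0, (mem_XiT hn _).2 fun i => ?_⟩
  exact ⟨by simp, by simp, 0, by simp⟩

/-- The lower bound on a single edge: completing the square amounts to testing with
`u = e^{nF/2}`. -/
lemma edge_lower {d n : ℕ} (hn : 0 < n) (F : (Fin d → ℝ) → ℝ) {x y : Fin d → ℝ}
    (h : NbrT d n x y) (m : (Fin d → ℝ) → ℝ) (hx : 0 ≤ m x) (hy : 0 ≤ m y) :
    m x * (RT d F n x y - 1) + m y * (RT d F n y x - 1) ≤
      piT d F n x * RT d F n x y *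
        (Real.sqrt (m y / piT d F n y) - Real.sqrt (m x / piT d F n x)) ^ 2 := by
  have hZ := ZT_pos hn F
  have hpx : 0 < piT d F n x := div_pos (Real.exp_pos _) hZ
  have hpy : 0 < piT d F n y := div_pos (Real.exp_pos _) hZ
  have hR : RT d F n x y = Real.exp (-((n : ℝ) / 2) * (F y - F x)) := by simp [RT, h]
  have hR' : RT d F n y x = (RT d F n x y)⁻¹ := by
    rw [hR, ← Real.exp_neg]
    simp only [RT, nbr_symm h, if_true]
    congr 1
    ring
  have hr : 0 < RT d F n x y := by rw [hR]; exact Real.exp_pos _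
  have hpi : piT d F n y = piT d F n x * RT d F n x y ^ 2 := by
    rw [hR, ← Real.exp_nat_mul, piT, piT, div_mul_eq_mul_div, ← Real.exp_add]
    congr 2
    push_cast
    ring
  rw [hR']
  generalize RT d F n x y = r at *
  have ha : m y = piT d F n y * Real.sqrt (m y / piT d F n y) ^ 2 := by
    rw [Real.sq_sqrt (div_nonneg hy hpy.le)]
    field_simp
  have hb : m x = piT d F n x * Real.sqrt (m x / piT d F n x) ^ 2 := by
    rw [Real.sq_sqrt (div_nonneg hx hpx.le)]
    field_simp
  generalize Real.sqrt (m y / piT d F n y) = a at *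
  generalize Real.sqrt (m x / piT d F n x) = b at *
  rw [ha, hb, hpi]
  generalize piT d F n x = p at *
  have key : p * r * (a - b) ^ 2 - (p * b ^ 2 * (r - 1) + p * r ^ 2 * a ^ 2 * (r⁻¹ - 1)) =
      p * (b - r * a) ^ 2 := by
    field_simp
    ring
  have : 0 ≤ p * (b - r * a) ^ 2 := by positivity
  linarith

lemma IT_lower {d n : ℕ} (hn : 3 ≤ n) {F : (Fin d → ℝ) → ℝ} (hF : PerT d F)
    (m : (Fin d → ℝ) → ℝ) (hm : ∀ x ∈ XiT d n, 0 ≤ m x) :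
    ∑ x ∈ XiT d n, m x * HT d F n x ≤ IT d F n m := by
  have hn0 : 0 < n := by omega
  set S : (Fin d → ℝ) → (Fin d → ℝ) → ℝ := fun x y =>
    if y ≠ x ∧ NbrT d n x y then m x * (RT d F n x y - 1) else 0 with hS
  have h1 : ∀ x ∈ XiT d n, m x * HT d F n x = ∑ y ∈ XiT d n, S x y := by
    intro x hx
    have : ∀ y ∈ XiT d n, S x y = if y ≠ x ∧ NbrT d n x y then
        m x * (Real.exp (-((n : ℝ) / 2) * (F y - F x)) - 1) else 0 := by
      intro y _
      simp only [hS]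
      split_ifs with h
      · simp [RT, h.2]
      · rfl
    rw [Finset.sum_congr rfl this, sum_nbr hn hx, HT, Finset.mul_sum]
    exact Finset.sum_congr rfl fun p _ => by rw [F_wrapT hF]
  have h2 : ∑ x ∈ XiT d n, ∑ y ∈ XiT d n, S x y =
      (1 / 2) * ∑ x ∈ XiT d n, ∑ y ∈ XiT d n, (S x y + S y x) := by
    simp only [Finset.sum_add_distrib]
    rw [Finset.sum_comm (f := fun x y => S y x)]
    ring
  rw [Finset.sum_congr rfl h1, h2, IT]
  refine mul_le_mul_of_nonneg_left (Finset.sum_le_sum fun x hx => ?_) (by norm_num)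
  have h3 : ∑ y ∈ XiT d n, (S x y + S y x) = ∑ y ∈ (XiT d n).erase x, (S x y + S y x) := by
    rw [← Finset.add_sum_erase _ _ hx]
    simp [hS]
  rw [h3]
  refine Finset.sum_le_sum fun y hy => ?_
  obtain ⟨hyx, hyX⟩ := Finset.mem_erase.1 hy
  by_cases h : NbrT d n x y
  · simp only [hS, h, nbr_symm h, hyx, hyx.symm, ne_eq, not_false_eq_true, and_self, if_true]
    exact edge_lower hn0 F h m (hm x hx) (hm y hyX)
  · have h' : ¬ NbrT d n y x := fun h' => h (nbr_symm h')
    simp [hS, h, h', RT]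

/-! ### Uniform convergence of `H_n` to `G` -/

lemma GT_eq (d : ℕ) (F : (Fin d → ℝ) → ℝ) (x : Fin d → ℝ) :
    GT d F x = ∑ p : Fin d × Bool,
      (Real.exp (-(sgnT p.2 / 2) * fderiv ℝ F x (Pi.single p.1 1)) - 1) := by
  rw [GT, Fintype.sum_prod_type]
  refine Finset.sum_congr rfl fun i _ => ?_
  rw [Real.cosh_eq, Fintype.sum_bool]
  simp only [sgnT, if_true, Bool.false_eq_true, if_false]
  have e1 : -((1 : ℝ) / 2) * fderiv ℝ F x (Pi.single i 1) =
    -(fderiv ℝ F x (Pi.single i 1) / 2) := by ring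
  have e2 : -((-1 : ℝ) / 2) * fderiv ℝ F x (Pi.single i 1) =
    (fderiv ℝ F x (Pi.single i 1) / 2) := by ring
  rw [e1, e2]
  ring

lemma stepT_eq (d n : ℕ) (x : Fin d → ℝ) (p : Fin d × Bool) :
    stepT d n x p = x + (sgnT p.2 / n) • Pi.single p.1 1 := by
  funext j
  simp [stepT, Pi.single_apply]

/-- `H_n → G` uniformly on the unit cube. -/
lemma H_uniform {d : ℕ} {F : (Fin d → ℝ) → ℝ} (hF : ContDiff ℝ 1 F) {ε : ℝ} (hε : 0 < ε) :
    ∀ᶠ n : ℕ in atTop, ∀ x : Fin d → ℝ, (∀ i, 0 ≤ x i ∧ x i < 1) →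
      |HT d F n x - GT d F x| ≤ ε := by
  set q : Fin d × Bool → (Fin d → ℝ) → ℝ := fun p x =>
    Real.exp (-(sgnT p.2 / 2) * fderiv ℝ F x (Pi.single p.1 1)) with hq
  have hqc : ∀ p, Continuous (q p) := fun p =>
    Real.continuous_exp.comp (continuous_const.mul
      ((hF.continuous_fderiv (by norm_num)).clm_apply continuous_const))
  -- each of the `2d` summands is allowed an error `η`
  set η : ℝ := ε / (2 * d + 1) with hη
  have hηp : 0 < η := by positivity
  have hp : ∀ p, ∀ᶠ n : ℕ in atTop, ∀ x : Fin d → ℝ, (∀ i, 0 ≤ x i ∧ x i < 1) →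
      |Real.exp (-((n : ℝ) / 2) * (F (stepT d n x p) - F x)) - q p x| ≤ η := by
    intro p
    have hK : IsCompact (Set.Icc (fun _ => -1 : Fin d → ℝ) (fun _ => 2)) := isCompact_Icc
    have huc := hK.uniformContinuousOn_of_continuous (hqc p).continuousOn
    obtain ⟨δ, hδ, hδ'⟩ := Metric.uniformContinuousOn_iff_le.1 huc η hηp
    obtain ⟨N, hN⟩ := exists_nat_gt (1 / δ)
    filter_upwards [eventually_ge_atTop (max N 1)] with n hn x hx
    have hn1 : (1 : ℝ) ≤ n := by exact_mod_cast (le_max_right N 1).trans hn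
    have hnN : (N : ℝ) ≤ n := by exact_mod_cast (le_max_left N 1).trans hn
    have hnp : (0 : ℝ) < n := by linarith
    have hnδ : 1 / (n : ℝ) ≤ δ := by
      rw [div_le_iff₀ hnp]
      have := (div_lt_iff₀ hδ).1 hN
      nlinarith
    obtain ⟨z, hz, hFz⟩ := domain_mvt (f := F) (s := Set.univ) (x := x) (y := stepT d n x p)
      (f' := fun x => fderiv ℝ F x)
      (fun z _ => ((hF.differentiable (by norm_num)) z).hasFDerivAt.hasFDerivWithinAt)
      convex_univ (Set.mem_univ _) (Set.mem_univ _)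
    have hqz : Real.exp (-((n : ℝ) / 2) * (F (stepT d n x p) - F x)) = q p z := by
      simp only [hq]
      rw [hFz, stepT_eq, add_sub_cancel_left, map_smul, smul_eq_mul]
      congr 1
      field_simp
    have hdist : dist z x ≤ 1 / n := by
      have h1 : stepT d n x p ∈ Metric.closedBall x (1 / n) := by
        rw [Metric.mem_closedBall, dist_pi_le_iff (by positivity)]
        intro j
        simp only [stepT, Real.dist_eq, add_sub_cancel_left]
        split_ifs
        · rw [abs_div, abs_of_pos hnp]
          rcases sgnT_cases p.2 with h | h <;> rw [h] <;> simp
        · simp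
      exact (convex_closedBall x (1 / (n : ℝ))).segment_subset
        (Metric.mem_closedBall_self (by positivity)) h1 hz
    have hn1' : 1 / (n : ℝ) ≤ 1 := by rw [div_le_one hnp]; exact hn1
    have hzx : ∀ i, |z i - x i| ≤ 1 := fun i => by
      rw [← Real.dist_eq]
      exact ((dist_le_pi_dist z x i).trans hdist).trans hn1'
    rw [hqz, ← Real.dist_eq]
    refine hδ' z ?_ x ?_ (hdist.trans hnδ)
    · exact ⟨fun i => by have := abs_le.1 (hzx i); have := hx i; simp only; linarith,
        fun i => by have := abs_le.1 (hzx i); have := hx i; simp only; linarith⟩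
    · exact ⟨fun i => by have := hx i; simp only; linarith,
        fun i => by have := hx i; simp only; linarith⟩
  filter_upwards [eventually_all.2 hp] with n hn x hx
  rw [HT, GT_eq, ← Finset.sum_sub_distrib]
  calc _ ≤ ∑ p : Fin d × Bool, η := by
        refine (Finset.abs_sum_le_sum_abs _ _).trans (Finset.sum_le_sum fun p _ => ?_)
        have := hn p x hx
        simp only [hq] at this
        rwa [sub_sub_sub_cancel_right]
    _ = (2 * d) * η := by
        rw [Finset.sum_const, Finset.card_univ, Fintype.card_prod, Fintype.card_fin,
          Fintype.card_bool, nsmul_eq_mul]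
        push_cast
        ring
    _ ≤ (2 * d + 1) * η := by nlinarith
    _ = ε := by rw [hη]; field_simp

lemma GT_continuous {d : ℕ} {F : (Fin d → ℝ) → ℝ} (hF : ContDiff ℝ 1 F) :
    Continuous (GT d F) := by
  have h := hF.continuous_fderiv (by norm_num)
  unfold GT
  refine continuous_finsetSum _ fun i _ => continuous_const.mul
    ((Real.continuous_cosh.comp ((h.clm_apply continuous_const).div_const 2)).sub
      continuous_const)

lemma GT_periodic {d : ℕ} {F : (Fin d → ℝ) → ℝ} (hF : PerT d F) : PerT d (GT d F) := by
  intro x v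
  have h : fderiv ℝ F (x + fun i => (v i : ℝ)) = fderiv ℝ F x := by
    rw [← fderiv_comp_add_right]
    congr 1
    funext y
    exact hF y v
  change GT d F (x + fun i => (v i : ℝ)) = _
  simp only [GT, h]


/-! ### The liminf inequality -/

/-- Γ-liminf for `ℐ_n`: if `μ_n → μ` weakly (on the torus), then
`liminf ℐ_n(μ_n) ≥ J(μ) = ∫ G dμ`. -/
theorem stmt11 (d : ℕ) (F : (Fin d → ℝ) → ℝ)
    (hFper : PerT d F)
    (hFC2 : ContDiff ℝ 2 F)
    (hFLip : ∃ L : NNReal, LipschitzWith L (iteratedFDeriv ℝ 2 F))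
    (hFfin : {x : Fin d → ℝ |
      (∀ i, x i ∈ Set.Ico (0 : ℝ) 1) ∧ fderiv ℝ F x = 0}.Finite)
    (μ : Measure (Fin d → ℝ)) (hμ : IsProbabilityMeasure μ)
    (hμsupp : μ (Set.univ.pi fun _ => Set.Ico (0 : ℝ) 1) = 1)
    (μn : ℕ → (Fin d → ℝ) → ℝ)
    (hμn : ∀ n, 0 < n →
      (∀ x ∈ XiT d n, 0 ≤ μn n x) ∧ ∑ x ∈ XiT d n, μn n x = 1)
    (hweak : ∀ g : (Fin d → ℝ) → ℝ, Continuous g → PerT d g →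
      Tendsto (fun n => ∑ x ∈ XiT d n, μn n x * g x) atTop
        (nhds (∫ x, g x ∂μ))) :
    ENNReal.ofReal (∫ x, GT d F x ∂μ) ≤
      liminf (fun n => ENNReal.ofReal (IT d F n (μn n))) atTop := by
  have hF1 : ContDiff ℝ 1 F := hFC2.of_le (by norm_num)
  have hGlim := hweak (GT d F) (GT_continuous hF1) (GT_periodic hFper)
  have hdiff : Tendsto (fun n => ∑ x ∈ XiT d n, μn n x * HT d F n x -
      ∑ x ∈ XiT d n, μn n x * GT d F x) atTop (nhds 0) := by
    rw [Metric.tendsto_nhds]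
    intro ε hε
    filter_upwards [H_uniform hF1 (half_pos hε), eventually_gt_atTop 0] with n hH hn
    obtain ⟨hpos, hsum⟩ := hμn n hn
    rw [dist_zero_right, Real.norm_eq_abs, ← Finset.sum_sub_distrib]
    calc _ ≤ ∑ x ∈ XiT d n, μn n x * (ε / 2) := by
          refine (Finset.abs_sum_le_sum_abs _ _).trans (Finset.sum_le_sum fun x hx => ?_)
          rw [← mul_sub, abs_mul, abs_of_nonneg (hpos x hx)]
          have hx' := (mem_XiT hn x).1 hx
          exact mul_le_mul_of_nonneg_left (hH x fun i => ⟨(hx' i).1, (hx' i).2.1⟩) (hpos x hx)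
      _ = ε / 2 := by rw [← Finset.sum_mul, hsum, one_mul]
      _ < ε := half_lt_self hε
  have hHlim : Tendsto (fun n => ∑ x ∈ XiT d n, μn n x * HT d F n x) atTop
      (nhds (∫ x, GT d F x ∂μ)) := by
    simpa using hdiff.add hGlim
  rw [← (ENNReal.tendsto_ofReal hHlim).liminf_eq]
  refine liminf_le_liminf ?_
  filter_upwards [eventually_ge_atTop 3] with n hn
  exact ENNReal.ofReal_le_ofReal (IT_lower hn hFper _ (hμn n (by omega)).1)

end
end
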